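/- There exists a real number τ > 0 such that every graph G that is both C₆-free and (complement of C₆)-free satisfies max(α(G), ω(G)) ≥ |G|^τ; that is, {C₆, C̄₆} has the Erdős–Hajnal property. -/

import Mathlib

open SimpleGraph

/-- The independence (stable set) number of a graph: the clique number of the complement. -/
noncomputable def alphaNum {V : Type*} (G : SimpleGraph V) : ℕ := Gᶜ.cliqueNum

/-- The clique number of a graph. -/
noncomputable def omegaNum {V : Type*} (G : SimpleGraph V) : ℕ := G.cliqueNum

/-- κ(G) = α(G)·ω(G). -/
noncomputable def kappaNum {V : Type*} (G : SimpleGraph V) : ℕ := alphaNum G * omegaNum G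

section
open scoped Classical

variable {V : Type} {G : SimpleGraph V}

/-- The elements of `A` satisfying `P`. -/
noncomputable def fil {V : Type} (A : Finset V) (P : V → Prop) : Finset V := A.filter P

lemma mem_fil {A : Finset V} {P : V → Prop} {z : V} : z ∈ fil A P ↔ z ∈ A ∧ P z :=
  Finset.mem_filter

lemma fil_subset (A : Finset V) (P : V → Prop) : fil A P ⊆ A := Finset.filter_subset _ _

/-- The number of elements of `A` satisfying `P`, as a real number. -/
noncomputable def cnt {V : Type} (A : Finset V) (P : V → Prop) : ℝ := ((fil A P).card : ℝ)

lemma card_fil (A : Finset V) (P : V → Prop) : ((fil A P).card : ℝ) = cnt A P := rfl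

/-- Every vertex of `S` has at most `y * |S|` neighbours in `S`. -/
def Sparse (G : SimpleGraph V) (y : ℝ) (S : Finset V) : Prop :=
  ∀ x ∈ S, cnt S (G.Adj x) ≤ y * S.card

/-- `S` is sparse in the graph or in its complement. -/
def Restricted (G : SimpleGraph V) (y : ℝ) (S : Finset V) : Prop :=
  Sparse G y S ∨ Sparse Gᶜ y S

/-- At least `k` pairwise disjoint and anticomplete subsets of `T`, each of size at least `s`. -/
def AFam (G : SimpleGraph V) (T : Finset V) (s k : ℝ) : Prop :=
  ∃ (ι : Type) (_ : Fintype ι) (B : ι → Finset V), k ≤ Fintype.card ι ∧ (∀ i, B i ⊆ T) ∧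
    (∀ i, s ≤ (B i).card) ∧ ∀ i j, i ≠ j → ∀ x ∈ B i, ∀ y ∈ B j, x ≠ y ∧ ¬ G.Adj x y

/-- `G` has no induced six-cycle. -/
def NoC6 (G : SimpleGraph V) : Prop :=
  ∀ a b c d e f, G.Adj a b → G.Adj b c → G.Adj c d → G.Adj d e → G.Adj e f → G.Adj f a →
    ¬ G.Adj a c → ¬ G.Adj a d → ¬ G.Adj a e → ¬ G.Adj b d → ¬ G.Adj b e → ¬ G.Adj b f →
    ¬ G.Adj c e → ¬ G.Adj c f → ¬ G.Adj d f → False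

lemma cnt_nonneg (A : Finset V) (P : V → Prop) : 0 ≤ cnt A P := Nat.cast_nonneg _

lemma cnt_le_card (A : Finset V) (P : V → Prop) : cnt A P ≤ A.card := by
  unfold cnt fil; exact_mod_cast Finset.card_filter_le _ _

lemma cnt_le_of_subset {A B : Finset V} {P Q : V → Prop} (hAB : A ⊆ B)
    (h : ∀ z ∈ A, P z → Q z) : cnt A P ≤ cnt B Q := by
  unfold cnt fil
  have : A.filter P ⊆ B.filter Q := by
    intro z hz
    rw [Finset.mem_filter] at hz ⊢
    exact ⟨hAB hz.1, h z hz.1 hz.2⟩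
  exact_mod_cast Finset.card_le_card this

lemma cnt_le_add {A : Finset V} {P Q R : V → Prop} (h : ∀ z ∈ A, P z → Q z ∨ R z) :
    cnt A P ≤ cnt A Q + cnt A R := by
  unfold cnt fil
  have : A.filter P ⊆ A.filter Q ∪ A.filter R := by
    intro z hz
    rw [Finset.mem_union, Finset.mem_filter, Finset.mem_filter]
    rw [Finset.mem_filter] at hz
    rcases h z hz.1 hz.2 with h | h
    · exact Or.inl ⟨hz.1, h⟩
    · exact Or.inr ⟨hz.1, h⟩
  exact_mod_cast (Finset.card_le_card this).trans (Finset.card_union_le _ _)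

lemma card_le_cnt_add {A : Finset V} {Q R : V → Prop} (h : ∀ z ∈ A, Q z ∨ R z) :
    (A.card : ℝ) ≤ cnt A Q + cnt A R := by
  have h1 : (A.card : ℝ) = cnt A (fun _ => True) := by simp [cnt, fil]
  rw [h1]
  exact cnt_le_add fun z hz _ => h z hz

lemma exists_of_cnt_pos {A : Finset V} {P : V → Prop} (h : 0 < cnt A P) : ∃ z ∈ A, P z := by
  unfold cnt fil at h
  have : 0 < (A.filter P).card := by exact_mod_cast h
  obtain ⟨z, hz⟩ := Finset.card_pos.1 this
  exact ⟨z, (Finset.mem_filter.1 hz).1, (Finset.mem_filter.1 hz).2⟩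

lemma cnt_exists_list_le {P : Type*} (l : List P) (A : Finset V) (bad : P → V → Prop) (c : ℝ)
    (h : ∀ p ∈ l, cnt A (bad p) ≤ c) : cnt A (fun z => ∃ p ∈ l, bad p z) ≤ l.length * c := by
  induction l with
  | nil => simp [cnt, fil]
  | cons p l ih =>
    have h1 : cnt A (fun z => ∃ q ∈ p :: l, bad q z) ≤
        cnt A (bad p) + cnt A (fun z => ∃ q ∈ l, bad q z) := by
      apply cnt_le_add
      rintro z - ⟨q, hq, hz⟩
      rcases List.mem_cons.1 hq with rfl | hq
      · exact Or.inl hz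
      · exact Or.inr ⟨q, hq, hz⟩
    have h2 := ih fun q hq => h q (List.mem_cons_of_mem _ hq)
    have h3 := h p List.mem_cons_self
    rw [List.length_cons]
    push_cast
    linarith

lemma sum_cnt_comm {W : Type} (A : Finset V) (B : Finset W) (R : V → W → Prop) :
    ∑ a ∈ A, cnt B (R a) = ∑ b ∈ B, cnt A (fun a => R a b) := by
  unfold cnt fil
  have := Finset.sum_card_bipartiteAbove_eq_sum_card_bipartiteBelow (s := A) (t := B) R
  unfold Finset.bipartiteAbove Finset.bipartiteBelow at this
  exact_mod_cast this

lemma mul_cnt_le_sum (A : Finset V) (f : V → ℝ) (hf : ∀ a ∈ A, 0 ≤ f a) (c : ℝ) :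
    c * cnt A (fun a => c ≤ f a) ≤ ∑ a ∈ A, f a := by
  calc c * cnt A (fun a => c ≤ f a) = ∑ a ∈ A.filter (fun a => c ≤ f a), c := by
        rw [Finset.sum_const, nsmul_eq_mul, mul_comm]; rfl
    _ ≤ ∑ a ∈ A.filter (fun a => c ≤ f a), f a :=
        Finset.sum_le_sum fun a ha => (Finset.mem_filter.1 ha).2
    _ ≤ ∑ a ∈ A, f a :=
        Finset.sum_le_sum_of_subset_of_nonneg (Finset.filter_subset _ _) fun a ha _ => hf a ha

/-- Few elements of `A` are related to an `ε`-fraction of `B` if every element of `B` is related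
to few elements of `A`. -/
lemma cnt_heavy_le {A B : Finset V} {R : V → V → Prop} {d ε δ : ℝ} (hε : 0 < ε)
    (hB : 0 < (B.card : ℝ)) (hd : ∀ b ∈ B, cnt A (fun a => R a b) ≤ d) (h : d ≤ ε * δ) :
    cnt A (fun a => ε * B.card ≤ cnt B (R a)) ≤ δ := by
  have h1 := mul_cnt_le_sum A (fun a => cnt B (R a)) (fun a _ => cnt_nonneg _ _) (ε * B.card)
  rw [sum_cnt_comm] at h1
  have h2 : ∑ b ∈ B, cnt A (fun a => R a b) ≤ B.card * d := by
    rw [← nsmul_eq_mul]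
    exact Finset.sum_le_card_nsmul _ _ _ hd
  have h3 : (ε * B.card) * cnt A (fun a => ε * B.card ≤ cnt B (R a)) ≤ (ε * B.card) * δ := by
    nlinarith
  exact le_of_mul_le_mul_left h3 (by positivity)

lemma exists_list_of_step {P : Type*} (I : List P → Prop) (k : ℕ) (h0 : I [])
    (h : ∀ l, l.length < k → I l → ∃ p, I (p :: l)) : ∃ l, l.length = k ∧ I l := by
  have : ∀ j, j ≤ k → ∃ l, l.length = j ∧ I l := by
    intro j
    induction j with
    | zero => exact fun _ => ⟨[], rfl, h0⟩
    | succ j ih =>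
      intro hj
      obtain ⟨l, hl, hI⟩ := ih (by omega)
      obtain ⟨p, hp⟩ := h l (by omega) hI
      exact ⟨p :: l, by simp [hl], hp⟩
  exact this k le_rfl

lemma AFam.mono {T T' : Finset V} {s s' k k' : ℝ} (h : AFam G T s k) (hT : T ⊆ T') (hs : s' ≤ s)
    (hk : k' ≤ k) : AFam G T' s' k' := by
  obtain ⟨ι, hι, B, h1, h2, h3, h4⟩ := h
  exact ⟨ι, hι, B, hk.trans h1, fun i => (h2 i).trans hT, fun i => hs.trans (h3 i), h4⟩

/-- Pruning a list of blocks: if each earlier entry spoils only a small fraction of each later block,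
and the unspoilt parts are anticomplete, then there is a large anticomplete family. -/
lemma AFam.of_pairwise {P : Type*} (l : List P) {R : P → P → Prop} (hR : l.Pairwise R)
    {T : Finset V} {s c : ℝ} (B : P → Finset V) (bad : P → P → V → Prop) (hc : 0 ≤ c)
    (hlc : l.length * c ≤ 1 / 2) (hT : ∀ p ∈ l, B p ⊆ T) (hs : ∀ p ∈ l, s ≤ (B p).card)
    (hbad : ∀ q ∈ l, ∀ p ∈ l, R q p → cnt (B p) (bad q p) ≤ c * (B p).card)
    (h : ∀ q ∈ l, ∀ p ∈ l, R q p → ∀ x ∈ B q, ∀ y ∈ B p, ¬ bad q p y → x ≠ y ∧ ¬ G.Adj x y) :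
    AFam G T (s / 2) l.length := by
  have key : ∀ (i j : Fin l.length), i < j → ∀ x ∈ B l[i],
      ∀ y ∈ fil (B l[j]) (fun y => ∀ q ∈ l.take j, ¬ bad q l[j] y), x ≠ y ∧ ¬ G.Adj x y := by
    intro i j hij x hx y hy
    rw [mem_fil] at hy
    have hi : l[i] ∈ l.take j := by
      rw [List.mem_take_iff_getElem]
      exact ⟨i, by simpa using hij, rfl⟩
    exact h _ (List.getElem_mem _) _ (List.getElem_mem _)
      (List.pairwise_iff_getElem.1 hR i j i.2 j.2 hij) x hx y hy.1 (hy.2 _ hi)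
  refine ⟨Fin l.length, inferInstance,
    fun i => fil (B l[i]) (fun y => ∀ q ∈ l.take i, ¬ bad q l[i] y), by simp, fun i => ?_,
    fun i => ?_, ?_⟩
  · exact (fil_subset _ _).trans (hT _ (List.getElem_mem _))
  · have h1 : cnt (B l[i]) (fun y => ∃ q ∈ l.take i, bad q l[i] y) ≤
        (l.take i).length * (c * (B l[i]).card) := by
      apply cnt_exists_list_le
      intro q hq
      obtain ⟨j, hj, rfl⟩ := List.mem_take_iff_getElem.1 hq
      have hj' : j < i := by simp at hj; omega
      exact hbad _ (List.getElem_mem _) _ (List.getElem_mem _)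
        (List.pairwise_iff_getElem.1 hR j i (by omega) i.2 hj')
    have h2 : ((B l[i]).card : ℝ) ≤ cnt (B l[i]) (fun y => ∀ q ∈ l.take i, ¬ bad q l[i] y) +
        cnt (B l[i]) (fun y => ∃ q ∈ l.take i, bad q l[i] y) := by
      apply card_le_cnt_add
      intro z _
      by_contra! h3
      obtain ⟨⟨q, hq, hq'⟩, h4⟩ := h3
      exact h4 q hq hq'
    have h3 : ((l.take i).length : ℝ) ≤ l.length := by
      exact_mod_cast List.length_take_le' _ _
    have h4 := hs l[i] (List.getElem_mem _)
    have h5 : (0 : ℝ) ≤ (B l[i]).card := Nat.cast_nonneg _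
    have h6 : ((l.take i).length : ℝ) * (c * (B l[i]).card) ≤ 1 / 2 * (B l[i]).card := by
      rw [← mul_assoc]
      exact mul_le_mul_of_nonneg_right ((mul_le_mul_of_nonneg_right h3 hc).trans hlc) h5
    change s / 2 ≤ cnt (B l[i]) (fun y => ∀ q ∈ l.take i, ¬ bad q l[i] y)
    linarith
  · intro i j hij x hx y hy
    rcases lt_or_gt_of_ne hij with h1 | h1
    · exact key i j h1 x (fil_subset _ _ hx) y hy
    · obtain ⟨h2, h3⟩ := key j i h1 y (fil_subset _ _ hy) x hx
      exact ⟨h2.symm, fun h4 => h3 h4.symm⟩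
end

section
open scoped Classical

variable {V : Type} {G : SimpleGraph V}

lemma pow_le_pow_div {t : ℝ} (ht : 0 < t) (ht1 : t ≤ 1 / 100) {a b : ℕ} (h : a + 1 ≤ b) :
    t ^ b ≤ t ^ a / 100 := by
  have h1 : t ^ b ≤ t ^ (a + 1) := pow_le_pow_of_le_one ht.le (by linarith) h
  have h2 : t ^ (a + 1) = t ^ a * t := pow_succ _ _
  have h3 : 0 < t ^ a := by positivity
  nlinarith

lemma pow_mul_le_div {t n : ℝ} (ht : 0 < t) (ht1 : t ≤ 1 / 100) (hn : 0 ≤ n) {a b : ℕ}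
    (h : a + 1 ≤ b) : t ^ b * n ≤ t ^ a * n / 100 := by
  have := mul_le_mul_of_nonneg_right (pow_le_pow_div ht ht1 h) hn
  linarith

lemma cnt_eq_le_one (A : Finset V) (a : V) : cnt A (fun x => x = a) ≤ 1 := by
  unfold cnt fil
  exact_mod_cast Finset.card_le_one.2 (by
    intro x hx y hy
    rw [Finset.mem_filter] at hx hy
    rw [hx.2, hy.2])

/-- A list of pieces `(q, f, B)` attached to an almost complete set `Q`. -/
lemma dense_chain {E Q : Finset V} {n t : ℝ} (hC : NoC6 G) (ht : 0 < t) (ht1 : t ≤ 1 / 100)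
    (hn : 0 < n) (hdeg : ∀ x ∈ E, cnt E (G.Adj x) ≤ t ^ 300 * n) (hQE : Q ⊆ E)
    (hQ : Sparse Gᶜ (t ^ 16) Q) (hQ1 : 1 ≤ t ^ 16 * Q.card)
    (hext : ∀ Qg ⊆ Q, (Q.card : ℝ) / 2 ≤ Qg.card → ∀ W : V → Prop, cnt E W ≤ t ^ 205 * n →
      ∃ q ∈ Qg, ∃ f ∈ E, ∃ B ⊆ E, G.Adj q f ∧ ¬ W f ∧
        (∀ b ∈ B, G.Adj f b ∧ ¬ G.Adj q b ∧ ¬ W b) ∧ t ^ 813 * n ≤ B.card) :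
    AFam G E (t ^ 813 * n / 2) (1 / t) := by
  have hQpos : (0 : ℝ) < Q.card := by
    by_contra h
    have : t ^ 16 * (Q.card : ℝ) ≤ 0 :=
      mul_nonpos_of_nonneg_of_nonpos (by positivity) (not_lt.1 h)
    linarith
  set k := ⌈1 / t⌉₊ with hk
  have hk1 : 1 / t ≤ k := Nat.le_ceil _
  have hk2 : k * t ≤ 2 := by
    have h1 : (k : ℝ) < 1 / t + 1 := Nat.ceil_lt_add_one (by positivity)
    have h2 : (1 / t + 1) * t = 1 + t := by field_simp
    nlinarith
  let Good : V × V × Finset V → Prop := fun p =>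
    p.1 ∈ Q ∧ p.2.1 ∈ E ∧ G.Adj p.1 p.2.1 ∧ cnt Q (G.Adj p.2.1) ≤ t ^ 10 * Q.card ∧ p.2.2 ⊆ E ∧
      (∀ b ∈ p.2.2, G.Adj p.2.1 b ∧ ¬ G.Adj p.1 b ∧ cnt Q (G.Adj b) ≤ t ^ 10 * Q.card) ∧
      t ^ 813 * n ≤ p.2.2.card
  let Rel : V × V × Finset V → V × V × Finset V → Prop := fun p o =>
    G.Adj o.1 p.1 ∧ ¬ G.Adj o.2.1 p.1 ∧ ¬ G.Adj o.1 p.2.1 ∧ ¬ G.Adj o.2.1 p.2.1 ∧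
      (∀ b ∈ p.2.2, ¬ G.Adj o.1 b ∧ ¬ G.Adj o.2.1 b) ∧
      cnt o.2.2 (G.Adj p.1) ≤ t ^ 5 * o.2.2.card ∧ cnt o.2.2 (G.Adj p.2.1) ≤ t ^ 5 * o.2.2.card
  have hBpos : ∀ p, Good p → (0 : ℝ) < p.2.2.card := fun p hp =>
    lt_of_lt_of_le (by positivity) hp.2.2.2.2.2.2
  obtain ⟨l, hl, hgood, hrel⟩ := exists_list_of_step
    (fun l => (∀ p ∈ l, Good p) ∧ l.Pairwise Rel) k ⟨by simp, by simp⟩ (by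
    rintro l hlk ⟨hgood, hrel⟩
    have hlk' : (l.length : ℝ) * t ≤ 2 := by
      have : (l.length : ℝ) ≤ k := by exact_mod_cast hlk.le
      nlinarith
    let bad : V × V × Finset V → V → Prop := fun o x =>
      ¬ G.Adj o.1 x ∨ G.Adj o.2.1 x ∨ t ^ 5 * o.2.2.card ≤ cnt o.2.2 (G.Adj x)
    have hbad : cnt Q (fun x => ∃ o ∈ l, bad o x) ≤ l.length * (t ^ 4 * Q.card / 20) := by
      apply cnt_exists_list_le
      intro o ho
      have ho' := hgood o ho
      have h1 : cnt Q (bad o) ≤ cnt Q (fun x => ¬ G.Adj o.1 x) + cnt Q (fun x => G.Adj o.2.1 x ∨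
          t ^ 5 * o.2.2.card ≤ cnt o.2.2 (G.Adj x)) := cnt_le_add fun _ _ h => h
      have h2 : cnt Q (fun x => G.Adj o.2.1 x ∨ t ^ 5 * o.2.2.card ≤ cnt o.2.2 (G.Adj x)) ≤
          cnt Q (G.Adj o.2.1) + cnt Q (fun x => t ^ 5 * o.2.2.card ≤ cnt o.2.2 (G.Adj x)) :=
        cnt_le_add fun _ _ h => h
      have h3 : cnt Q (fun x => ¬ G.Adj o.1 x) ≤ cnt Q (Gᶜ.Adj o.1) + cnt Q (fun x => x = o.1) := by
        apply cnt_le_add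
        intro z _ hz
        by_cases hzo : z = o.1
        · exact Or.inr hzo
        · left
          rw [SimpleGraph.compl_adj]
          exact ⟨fun h => hzo h.symm, hz⟩
      have h4 := cnt_eq_le_one Q o.1
      have h5 := hQ o.1 ho'.1
      have h6 := ho'.2.2.2.1
      have h7 : cnt Q (fun x => t ^ 5 * o.2.2.card ≤ cnt o.2.2 (G.Adj x)) ≤ t ^ 5 * Q.card := by
        apply cnt_heavy_le (d := t ^ 10 * Q.card) (by positivity) (hBpos o ho')
        · intro b hb
          simpa only [G.adj_comm] using (ho'.2.2.2.2.2.1 b hb).2.2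
        · apply le_of_eq; ring
      have a1 := pow_mul_le_div ht ht1 hQpos.le (show 4 + 1 ≤ 5 by norm_num)
      have a2 := pow_mul_le_div ht ht1 hQpos.le (show 4 + 1 ≤ 10 by norm_num)
      have a3 := pow_mul_le_div ht ht1 hQpos.le (show 4 + 1 ≤ 16 by norm_num)
      linarith
    let W : V → Prop := fun z => t ^ 10 * Q.card ≤ cnt Q (G.Adj z) ∨
      ∃ o ∈ l, G.Adj o.1 z ∨ G.Adj o.2.1 z ∨ t ^ 5 * o.2.2.card ≤ cnt o.2.2 (G.Adj z)
    have hW : cnt E W ≤ t ^ 205 * n := by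
      have h1 : cnt E (fun z => t ^ 10 * Q.card ≤ cnt Q (G.Adj z)) ≤ t ^ 290 * n := by
        apply cnt_heavy_le (d := t ^ 300 * n) (by positivity) hQpos
        · intro b hb
          simpa only [G.adj_comm] using hdeg b (hQE hb)
        · apply le_of_eq; ring
      have h2 : cnt E (fun z => ∃ o ∈ l, G.Adj o.1 z ∨ G.Adj o.2.1 z ∨
          t ^ 5 * o.2.2.card ≤ cnt o.2.2 (G.Adj z)) ≤ l.length * (t ^ 290 * n) := by
        apply cnt_exists_list_le
        intro o ho
        have ho' := hgood o ho
        have h3 : cnt E (fun z => G.Adj o.1 z ∨ G.Adj o.2.1 z ∨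
            t ^ 5 * o.2.2.card ≤ cnt o.2.2 (G.Adj z)) ≤ cnt E (G.Adj o.1) +
            cnt E (fun z => G.Adj o.2.1 z ∨ t ^ 5 * o.2.2.card ≤ cnt o.2.2 (G.Adj z)) :=
          cnt_le_add fun _ _ h => h
        have h4 : cnt E (fun z => G.Adj o.2.1 z ∨ t ^ 5 * o.2.2.card ≤ cnt o.2.2 (G.Adj z)) ≤
            cnt E (G.Adj o.2.1) + cnt E (fun z => t ^ 5 * o.2.2.card ≤ cnt o.2.2 (G.Adj z)) :=
          cnt_le_add fun _ _ h => h
        have h5 := hdeg _ (hQE ho'.1)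
        have h6 := hdeg _ ho'.2.1
        have h7 : cnt E (fun z => t ^ 5 * o.2.2.card ≤ cnt o.2.2 (G.Adj z)) ≤ t ^ 295 * n := by
          apply cnt_heavy_le (d := t ^ 300 * n) (by positivity) (hBpos o ho')
          · intro b hb
            simpa only [G.adj_comm] using hdeg b (ho'.2.2.2.2.1 hb)
          · apply le_of_eq; ring
        have a1 := pow_mul_le_div ht ht1 hn.le (show 290 + 1 ≤ 300 by norm_num)
        have a2 := pow_mul_le_div ht ht1 hn.le (show 290 + 1 ≤ 295 by norm_num)
        have a3 : 0 < t ^ 290 * n := by positivity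
        linarith
      have h3 : cnt E W ≤ _ := cnt_le_add fun _ _ h => h
      have a1 := pow_mul_le_div ht ht1 hn.le (show 205 + 1 ≤ 290 by norm_num)
      have a2 := pow_mul_le_div ht ht1 hn.le (show 205 + 1 ≤ 289 by norm_num)
      have a3 : (l.length : ℝ) * (t ^ 290 * n) ≤ 2 * (t ^ 289 * n) := by
        calc (l.length : ℝ) * (t ^ 290 * n) = (l.length * t) * (t ^ 289 * n) := by ring
          _ ≤ 2 * (t ^ 289 * n) := mul_le_mul_of_nonneg_right hlk' (by positivity)
      have a4 : 0 < t ^ 205 * n := by positivity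
      linarith
    have hQg : (Q.card : ℝ) / 2 ≤ (fil Q (fun x => ¬ ∃ o ∈ l, bad o x)).card := by
      have h1 : (Q.card : ℝ) ≤ cnt Q (fun x => ¬ ∃ o ∈ l, bad o x) +
        cnt Q (fun x => ∃ o ∈ l, bad o x) := card_le_cnt_add fun _ _ => (em _).symm
      have a3 : (l.length : ℝ) * (t ^ 4 * Q.card / 20) ≤ Q.card / 2 := by
        calc (l.length : ℝ) * (t ^ 4 * Q.card / 20) = (l.length * t) * (t ^ 3 * Q.card / 20) := by
              ring
          _ ≤ 2 * (t ^ 3 * Q.card / 20) := mul_le_mul_of_nonneg_right hlk' (by positivity)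
          _ ≤ Q.card / 2 := by
            have := pow_mul_le_div ht ht1 hQpos.le (show 0 + 1 ≤ 3 by norm_num)
            linarith
      rw [card_fil]
      linarith
    obtain ⟨q, hq, f, hf, B, hBE, hqf, hWf, hB, hBc⟩ := hext _ (fil_subset _ _) hQg W hW
    rw [mem_fil] at hq
    refine ⟨(q, f, B), ?_, ?_⟩
    · intro p hp
      rcases List.mem_cons.1 hp with rfl | hp
      · refine ⟨hq.1, hf, hqf, ?_, hBE, fun b hb => ⟨(hB b hb).1, (hB b hb).2.1, ?_⟩, hBc⟩
        · exact (not_le.1 fun h => hWf (Or.inl h)).le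
        · exact (not_le.1 fun h => (hB b hb).2.2 (Or.inl h)).le
      · exact hgood p hp
    · rw [List.pairwise_cons]
      refine ⟨fun o ho => ?_, hrel⟩
      have h1 : ¬ bad o q := fun h => hq.2 ⟨o, ho, h⟩
      have h2 : ∀ z, ¬ W z → ¬ (G.Adj o.1 z ∨ G.Adj o.2.1 z ∨
          t ^ 5 * o.2.2.card ≤ cnt o.2.2 (G.Adj z)) := fun z hz h => hz (Or.inr ⟨o, ho, h⟩)
      have h3 := h2 f hWf
      simp only [bad, not_or, not_not, not_le] at h1 h2 h3
      exact ⟨h1.1, h1.2.1, h3.1, h3.2.1,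
        fun b hb => ⟨(h2 b (hB b hb).2.2).1, (h2 b (hB b hb).2.2).2.1⟩, h1.2.2.le, h3.2.2.le⟩)
  have hlk : (l.length : ℝ) * t ≤ 2 := by rw [hl]; exact hk2
  have := AFam.of_pairwise (G := G) (T := E) l hrel (c := 2 * t ^ 5) (s := t ^ 813 * n)
    (fun p => p.2.2) (fun p _ y => G.Adj p.1 y ∨ G.Adj p.2.1 y) (by positivity) (by
      calc (l.length : ℝ) * (2 * t ^ 5) = (l.length * t) * (2 * t ^ 4) := by ring
        _ ≤ 2 * (2 * t ^ 4) := mul_le_mul_of_nonneg_right hlk (by positivity)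
        _ ≤ 1 / 2 := by
          have := pow_le_pow_div ht ht1 (show 0 + 1 ≤ 4 by norm_num)
          norm_num at this
          linarith)
    (fun p hp => (hgood p hp).2.2.2.2.1) (fun p hp => (hgood p hp).2.2.2.2.2.2)
    (by
      intro q hq p hp hR
      have h1 : cnt p.2.2 (fun y => G.Adj q.1 y ∨ G.Adj q.2.1 y) ≤ _ := cnt_le_add fun _ _ h => h
      have h2 := hR.2.2.2.2.2
      linarith)
    (by
      intro q hq p hp hR x hx y hy hbad
      rw [not_or] at hbad
      obtain ⟨r1, r2, r3, r4, r5, -⟩ := hR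
      have hq' := hgood q hq
      have hp' := hgood p hp
      have hx' := hq'.2.2.2.2.2.1 x hx
      have hy' := hp'.2.2.2.2.2.1 y hy
      refine ⟨?_, fun hxy => ?_⟩
      · rintro rfl
        exact (r5 x hx).2 hy'.1
      · exact hC p.1 p.2.1 y x q.2.1 q.1 hp'.2.2.1 hy'.1 hxy.symm hx'.1.symm hq'.2.2.1.symm r1.symm
          hy'.2.1 (r5 x hx).1 r3 (r5 x hx).2 r4 r2 (fun h => hbad.2 h.symm)
          (fun h => hbad.1 h.symm) (fun h => hx'.2.1 h.symm))
  exact this.mono le_rfl le_rfl (by rw [hl]; exact hk1)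
end

section
open scoped Classical

variable {V : Type} {G : SimpleGraph V}

/-- A very sparse set `E` with good expansion in which no large subset is much sparser. -/
structure Setting (G : SimpleGraph V) (E : Finset V) (n t : ℝ) (C : ℕ) : Prop where
  noC6 : NoC6 G
  ht : 0 < t
  ht1 : t ≤ 1 / 100
  hC : 100 ≤ C
  big : 1 ≤ t ^ (32 * C + 619) * n
  deg : ∀ x ∈ E, cnt E (G.Adj x) ≤ t ^ 300 * n
  stuck : ∀ F ⊆ E, t ^ 212 * n ≤ F.card → ∃ x ∈ F, t ^ 600 * F.card < cnt F (G.Adj x)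
  card_ge : n / 2 ≤ E.card
  card_le : E.card ≤ n
  expand : ∀ X ⊆ E, t ^ (32 * C + 603) * n ≤ X.card →
    t ^ 204 * n ≤ cnt E (fun z => z ∈ X ∨ ∃ x ∈ X, G.Adj x z)
  expand' : ∀ X ⊆ E, t ^ 832 * n ≤ X.card →
    t ^ 2 * n / 2 ≤ cnt E (fun z => z ∈ X ∨ ∃ x ∈ X, G.Adj x z)
  nested : ∀ T ⊆ E, ∃ X ⊆ T, t ^ (16 * C) * T.card ≤ X.card ∧ Restricted G (t ^ 16) X

variable {E : Finset V} {n t : ℝ} {C : ℕ}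

lemma Setting.hn (h : Setting G E n t C) : 0 < n := by
  have h1 := h.big
  have h2 : 0 < t ^ (32 * C + 619) := pow_pos h.ht _
  by_contra h3
  have := mul_nonpos_of_nonneg_of_nonpos h2.le (not_lt.1 h3)
  linarith

lemma Setting.one_le (h : Setting G E n t C) {X : Finset V}
    (hX : t ^ (32 * C + 603) * n ≤ X.card) : 1 ≤ t ^ 16 * X.card := by
  have h2 : 0 < t ^ 16 := pow_pos h.ht _
  calc 1 ≤ t ^ (32 * C + 619) * n := h.big
    _ = t ^ 16 * (t ^ (32 * C + 603) * n) := by ring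
    _ ≤ t ^ 16 * X.card := mul_le_mul_of_nonneg_left hX h2.le

/-- An edge-dense spot in `F` avoids the neighbourhood of a vertex with few neighbours in `F`. -/
lemma Setting.exists_block (h : Setting G E n t C) {F : Finset V} (hF : F ⊆ E)
    (hFc : t ^ 212 * n ≤ F.card) : ∃ f ∈ F, ∀ q, cnt F (G.Adj q) < t ^ 813 * n →
      t ^ 813 * n ≤ cnt F (fun z => G.Adj f z ∧ ¬ G.Adj q z) := by
  obtain ⟨f, hf, hf'⟩ := h.stuck F hF hFc
  refine ⟨f, hf, fun q hq => ?_⟩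
  have h1 : cnt F (G.Adj f) ≤ cnt F (fun z => G.Adj f z ∧ ¬ G.Adj q z) + cnt F (G.Adj q) :=
    cnt_le_add fun z _ hz => by tauto
  have h2 : t ^ 812 * n ≤ t ^ 600 * F.card := by
    calc t ^ 812 * n = t ^ 600 * (t ^ 212 * n) := by ring
      _ ≤ t ^ 600 * F.card := mul_le_mul_of_nonneg_left hFc (pow_pos h.ht _).le
  have h3 := pow_mul_le_div h.ht h.ht1 h.hn.le (show 812 + 1 ≤ 813 by norm_num)
  have h4 : 0 < t ^ 812 * n := mul_pos (pow_pos h.ht _) h.hn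
  linarith

lemma Setting.closed_dense (h : Setting G E n t C) {v : V} (hv : v ∈ E) {W : V → Prop}
    (hW : cnt E W ≤ t ^ 205 * n) {X : Finset V} (hXE : X ⊆ E)
    (hX : ∀ a ∈ X, G.Adj v a ∧ cnt E (fun z => G.Adj a z ∧ ¬ G.Adj v z ∧ ¬ W z) < t ^ 813 * n)
    (hXc : 2 * (t ^ (32 * C + 603) * n) ≤ X.card) (hXd : Sparse Gᶜ (t ^ 16) X) :
    AFam G E (t ^ 813 * n / 2) (1 / t) := by
  have hn := h.hn
  have ht := h.ht
  have ht1 := h.ht1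
  have hp : 0 < t ^ (32 * C + 603) * n := by positivity
  refine dense_chain h.noC6 ht ht1 hn h.deg hXE hXd (h.one_le (by linarith)) ?_
  intro Qg hQg hQgc W' hW'
  have h1 := h.expand Qg (hQg.trans hXE) (by linarith)
  set F := fil E (fun z => (∃ x ∈ Qg, G.Adj x z) ∧ ¬ G.Adj v z ∧ ¬ W z ∧ ¬ W' z) with hF
  have hFc : t ^ 212 * n ≤ F.card := by
    have h2 : cnt E (fun z => z ∈ Qg ∨ ∃ x ∈ Qg, G.Adj x z) ≤ F.card +
        cnt E (fun z => G.Adj v z ∨ W z ∨ W' z) := by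
      apply cnt_le_add
      rintro z - (hz | hz)
      · exact Or.inr (Or.inl (hX z (hQg hz)).1)
      · by_cases hh : G.Adj v z ∨ W z ∨ W' z
        · exact Or.inr hh
        · exact Or.inl ⟨hz, by tauto⟩
    have h3 : cnt E (fun z => G.Adj v z ∨ W z ∨ W' z) ≤ _ := cnt_le_add fun _ _ h => h
    have h4 : cnt E (fun z => W z ∨ W' z) ≤ _ := cnt_le_add fun _ _ h => h
    have h5 := h.deg v hv
    have a1 := pow_mul_le_div ht ht1 hn.le (show 204 + 1 ≤ 300 by norm_num)
    have a2 := pow_mul_le_div ht ht1 hn.le (show 204 + 1 ≤ 205 by norm_num)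
    have a3 := pow_mul_le_div ht ht1 hn.le (show 204 + 1 ≤ 212 by norm_num)
    have a4 : 0 < t ^ 204 * n := by positivity
    linarith
  obtain ⟨f, hf, hf'⟩ := h.exists_block (fil_subset _ _) hFc
  have hf2 := mem_fil.1 hf
  obtain ⟨q, hq, hqf⟩ := hf2.2.1
  have hthin : cnt F (G.Adj q) < t ^ 813 * n := by
    refine lt_of_le_of_lt (cnt_le_of_subset (fil_subset _ _) ?_) (hX q (hQg hq)).2
    intro z hz hqz
    rw [hF, mem_fil] at hz
    exact ⟨hqz, hz.2.2.1, hz.2.2.2.1⟩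
  refine ⟨q, hq, f, hf2.1, fil F (fun z => G.Adj f z ∧ ¬ G.Adj q z), ?_, hqf, hf2.2.2.2.2, ?_,
    hf' q hthin⟩
  · exact (fil_subset _ _).trans (fil_subset _ _)
  · intro b hb
    rw [mem_fil, hF, mem_fil] at hb
    tauto

/-- No vertex has many neighbours all of which have few neighbours outside its neighbourhood. -/
def NonClosed (G : SimpleGraph V) (E : Finset V) (n t : ℝ) (C : ℕ) : Prop :=
  ∀ v ∈ E, ∀ W : V → Prop, cnt E W ≤ t ^ 205 * n →
    cnt E (fun a => G.Adj v a ∧ cnt E (fun z => G.Adj a z ∧ ¬ G.Adj v z ∧ ¬ W z) < t ^ 813 * n) <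
      t ^ (16 * C + 602) * n

lemma NonClosed.exists_mem (hN : NonClosed G E n t C) {v : V} (hv : v ∈ E) {W : V → Prop}
    (hW : cnt E W ≤ t ^ 205 * n) {X : Finset V} (hXE : X ⊆ E) (hX : ∀ a ∈ X, G.Adj v a)
    (hXc : t ^ (16 * C + 602) * n ≤ X.card) :
    ∃ a ∈ X, t ^ 813 * n ≤ cnt E (fun z => G.Adj a z ∧ ¬ G.Adj v z ∧ ¬ W z) := by
  by_contra! hcon
  have h1 := hN v hv W hW
  have h2 : cnt X (fun _ => True) ≤ cnt E (fun a => G.Adj v a ∧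
      cnt E (fun z => G.Adj a z ∧ ¬ G.Adj v z ∧ ¬ W z) < t ^ 813 * n) :=
    cnt_le_of_subset hXE fun a ha _ => ⟨hX a ha, hcon a ha⟩
  have h3 : cnt X (fun _ => True) = X.card := by simp [cnt, fil]
  linarith

lemma Setting.nonclosed_dense (h : Setting G E n t C) (hN : NonClosed G E n t C) {u : V}
    (hu : u ∈ E) {Q : Finset V} (hQE : Q ⊆ E) (hQ : ∀ q ∈ Q, G.Adj u q)
    (hQc : 2 * (t ^ (16 * C + 602) * n) ≤ Q.card) (hQd : Sparse Gᶜ (t ^ 16) Q) :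
    AFam G E (t ^ 813 * n / 2) (1 / t) := by
  have hn := h.hn
  have ht := h.ht
  have ht1 := h.ht1
  have hC := h.hC
  have hp : 0 < t ^ (16 * C + 602) * n := by positivity
  have hm : t ^ (16 * C + 602) * n ≤ t ^ 813 * n :=
    mul_le_mul_of_nonneg_right (pow_le_pow_of_le_one ht.le (by linarith) (by omega)) hn.le
  have hm' := pow_mul_le_div ht ht1 hn.le (show 16 * C + 602 + 1 ≤ 32 * C + 603 by omega)
  refine dense_chain h.noC6 ht ht1 hn h.deg hQE hQd (h.one_le (by linarith)) ?_
  intro Qg hQg hQgc W hW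
  obtain ⟨q, hq, hq'⟩ := hN.exists_mem hu hW (hQg.trans hQE) (fun a ha => hQ a (hQg ha))
    (by linarith)
  obtain ⟨f, hf, hf'⟩ := hN.exists_mem (hQE (hQg hq)) hW
    (X := fil E (fun z => G.Adj q z ∧ ¬ G.Adj u z ∧ ¬ W z)) (fil_subset _ _)
    (fun a ha => (mem_fil.1 ha).2.1) (hm.trans hq')
  rw [mem_fil] at hf
  refine ⟨q, hq, f, hf.1, fil E (fun z => G.Adj f z ∧ ¬ G.Adj q z ∧ ¬ W z), fil_subset _ _, hf.2.1,
    hf.2.2.2, fun b hb => (mem_fil.1 hb).2, hf'⟩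
end

section
open scoped Classical

variable {V : Type} {G : SimpleGraph V} {E : Finset V} {n t : ℝ} {C : ℕ}

lemma exists_subset_intermediate (f : Finset V → ℝ) {c d : ℝ} (hc : 0 < c) (h0 : f ∅ ≤ 0)
    (X : Finset V) (h : ∀ s ⊆ X, ∀ a ∈ X, f (insert a s) ≤ f s + d) (hX : c ≤ f X) :
    ∃ R ⊆ X, c ≤ f R ∧ f R ≤ c + d := by
  induction X using Finset.induction_on with
  | empty => linarith
  | insert a s _ ih =>
    by_cases hs : c ≤ f s
    · obtain ⟨R, hR, hR'⟩ := ih (fun u hu b hb => h u (hu.trans (Finset.subset_insert _ _)) b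
        (Finset.mem_insert_of_mem hb)) hs
      exact ⟨R, hR.trans (Finset.subset_insert _ _), hR'⟩
    · have := h s (Finset.subset_insert _ _) a (Finset.mem_insert_self _ _)
      exact ⟨insert a s, subset_rfl, hX, by linarith⟩

/-- A block `Y` in the neighbourhood of `f`, each member of which has a parent in `R`. -/
structure RootedBlock (V : Type) where
  x : V
  f : V
  Y : Finset V
  par : V → V
  R : Finset V

lemma ceil_inv_mul_le {t : ℝ} (ht : 0 < t) (ht1 : t ≤ 1 / 100) : (⌈1 / t⌉₊ : ℝ) * t ≤ 2 := by
  have h1 : (⌈1 / t⌉₊ : ℝ) < 1 / t + 1 := Nat.ceil_lt_add_one (by positivity)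
  have h2 : (1 / t + 1) * t = 1 + t := by field_simp
  nlinarith

lemma Setting.closed_sparse (h : Setting G E n t C) {v : V} (hv : v ∈ E) {W : V → Prop}
    (hW : cnt E W ≤ t ^ 205 * n) {X : Finset V} (hXE : X ⊆ E)
    (hX : ∀ a ∈ X, G.Adj v a ∧ cnt E (fun z => G.Adj a z ∧ ¬ G.Adj v z ∧ ¬ W z) < t ^ 813 * n)
    (hXc : 2 * (t ^ (32 * C + 603) * n) ≤ X.card) (hXd : Sparse G (t ^ 16) X) :
    AFam G E (t ^ 813 * n / 2) (1 / t) := by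
  have hn := h.hn
  have ht := h.ht
  have ht1 := h.ht1
  have hp : 0 < t ^ (32 * C + 603) * n := by positivity
  have hXpos : (0 : ℝ) < X.card := by linarith
  let k := ⌈1 / t⌉₊
  have hk1 : 1 / t ≤ k := Nat.le_ceil _
  have hk2 : k * t ≤ 2 := ceil_inv_mul_le ht ht1
  let U : V → Prop := fun z => ¬ G.Adj v z ∧ ¬ W z ∧ ¬ t ^ 10 * X.card ≤ cnt X (G.Adj z)
  let Good : RootedBlock V → Prop := fun p =>
    p.x ∈ p.R ∧ p.R ⊆ X ∧ p.f ∈ E ∧ G.Adj p.x p.f ∧ U p.f ∧ p.Y ⊆ E ∧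
      (∀ b ∈ p.Y, G.Adj p.f b ∧ ¬ G.Adj p.x b ∧ U b ∧ p.par b ∈ p.R ∧ G.Adj (p.par b) b) ∧
      t ^ 813 * n ≤ p.Y.card
  let Rel : RootedBlock V → RootedBlock V → Prop := fun p o =>
    (∀ r ∈ o.R, ¬ G.Adj r p.f) ∧ (∀ b ∈ p.Y, ∀ r ∈ o.R, ¬ G.Adj r b) ∧
      cnt o.Y (G.Adj p.f) ≤ t ^ 5 * o.Y.card ∧ cnt o.Y (G.Adj p.x) ≤ t ^ 5 * o.Y.card ∧
      cnt o.Y (fun b => G.Adj (o.par b) p.x) ≤ t ^ 5 * o.Y.card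
  let Old : List (RootedBlock V) → V → Prop := fun l z => ∃ o ∈ l, ∃ r ∈ o.R, G.Adj r z
  have hYpos : ∀ p, Good p → (0 : ℝ) < p.Y.card := fun p hp =>
    lt_of_lt_of_le (by positivity) hp.2.2.2.2.2.2.2
  obtain ⟨l, hl, hgood, hrel, -⟩ := exists_list_of_step
    (fun l => (∀ p ∈ l, Good p) ∧ l.Pairwise Rel ∧
      cnt E (fun z => U z ∧ Old l z) ≤ l.length * (3 * (t ^ 212 * n))) k
    ⟨by simp, by simp, by simp [cnt, fil, Old]⟩ (by
    rintro l hlk ⟨hgood, hrel, hold⟩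
    have hlk' : (l.length : ℝ) * t ≤ 2 := by
      have : (l.length : ℝ) ≤ k := by exact_mod_cast hlk.le
      nlinarith
    let bad : RootedBlock V → V → Prop := fun o x => t ^ 5 * o.Y.card ≤ cnt o.Y (G.Adj x) ∨
      t ^ 5 * o.Y.card ≤ cnt o.Y (fun b => G.Adj (o.par b) x)
    have hbad : cnt X (fun x => ∃ o ∈ l, bad o x) ≤ l.length * (2 * (t ^ 5 * X.card)) := by
      apply cnt_exists_list_le
      intro o ho
      have ho' := hgood o ho
      have h1 : cnt X (bad o) ≤ _ := cnt_le_add fun _ _ h => h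
      have h2 : cnt X (fun x => t ^ 5 * o.Y.card ≤ cnt o.Y (G.Adj x)) ≤ t ^ 5 * X.card := by
        apply cnt_heavy_le (d := t ^ 10 * X.card) (by positivity) (hYpos o ho')
        · intro b hb
          have := (ho'.2.2.2.2.2.2.1 b hb).2.2.1.2.2
          simpa only [G.adj_comm] using (not_le.1 this).le
        · apply le_of_eq; ring
      have h3 : cnt X (fun x => t ^ 5 * o.Y.card ≤ cnt o.Y (fun b => G.Adj (o.par b) x)) ≤
          t ^ 5 * X.card := by
        apply cnt_heavy_le (R := fun x b => G.Adj (o.par b) x) (d := t ^ 16 * X.card)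
          (by positivity) (hYpos o ho')
        · intro b hb
          exact hXd _ (ho'.2.1 (ho'.2.2.2.2.2.2.1 b hb).2.2.2.1)
        · have := pow_le_pow_of_le_one ht.le (by linarith : t ≤ 1) (show 10 ≤ 16 by norm_num)
          calc t ^ 16 * (X.card : ℝ) ≤ t ^ 10 * X.card := mul_le_mul_of_nonneg_right this hXpos.le
            _ = _ := by ring
      linarith
    let Xg := fil X (fun x => ¬ ∃ o ∈ l, bad o x)
    have hXg : (X.card : ℝ) / 2 ≤ Xg.card := by
      have h1 : (X.card : ℝ) ≤ cnt X (fun x => ¬ ∃ o ∈ l, bad o x) +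
        cnt X (fun x => ∃ o ∈ l, bad o x) := card_le_cnt_add fun _ _ => (em _).symm
      have a3 : (l.length : ℝ) * (2 * (t ^ 5 * X.card)) ≤ X.card / 2 := by
        calc (l.length : ℝ) * (2 * (t ^ 5 * X.card)) = (l.length * t) * (2 * (t ^ 4 * X.card)) := by
              ring
          _ ≤ 2 * (2 * (t ^ 4 * X.card)) := mul_le_mul_of_nonneg_right hlk' (by positivity)
          _ ≤ X.card / 2 := by
            have := pow_mul_le_div ht ht1 hXpos.le (show 0 + 1 ≤ 4 by norm_num)
            linarith
      change (X.card : ℝ) / 2 ≤ cnt X _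
      linarith
    let Hv : V → Prop := fun z => ∃ o ∈ l, t ^ 5 * o.Y.card ≤ cnt o.Y (G.Adj z)
    have hHv : cnt E Hv ≤ 2 * (t ^ 294 * n) := by
      have h2 : cnt E Hv ≤ l.length * (t ^ 295 * n) := by
        apply cnt_exists_list_le
        intro o ho
        have ho' := hgood o ho
        apply cnt_heavy_le (d := t ^ 300 * n) (by positivity) (hYpos o ho')
        · intro b hb
          simpa only [G.adj_comm] using h.deg b (ho'.2.2.2.2.2.1 hb)
        · apply le_of_eq; ring
      refine h2.trans ?_
      calc (l.length : ℝ) * (t ^ 295 * n) = (l.length * t) * (t ^ 294 * n) := by ring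
        _ ≤ 2 * (t ^ 294 * n) := mul_le_mul_of_nonneg_right hlk' (by positivity)
    have hOld : cnt E (fun z => U z ∧ Old l z) ≤ 6 * (t ^ 211 * n) := by
      refine hold.trans ?_
      calc (l.length : ℝ) * (3 * (t ^ 212 * n)) = (l.length * t) * (3 * (t ^ 211 * n)) := by ring
        _ ≤ 2 * (3 * (t ^ 211 * n)) := mul_le_mul_of_nonneg_right hlk' (by positivity)
        _ = _ := by ring
    let H : Finset V → ℝ := fun R => cnt E (fun z => (∃ r ∈ R, G.Adj r z) ∧ U z ∧ ¬ Old l z ∧ ¬ Hv z)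
    have hH : t ^ 212 * n ≤ H Xg := by
      have h1 := h.expand Xg ((fil_subset _ _).trans hXE) (by linarith)
      have h2 : cnt E (fun z => z ∈ Xg ∨ ∃ x ∈ Xg, G.Adj x z) ≤ H Xg +
          cnt E (fun z => G.Adj v z ∨ W z ∨ t ^ 10 * X.card ≤ cnt X (G.Adj z) ∨ (U z ∧ Old l z) ∨
            Hv z) := by
        apply cnt_le_add
        rintro z - (hz | hz)
        · exact Or.inr (Or.inl (hX z (fil_subset _ _ hz)).1)
        · by_cases hU : U z
          · by_cases hO : Old l z
            · exact Or.inr (Or.inr (Or.inr (Or.inr (Or.inl ⟨hU, hO⟩))))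
            · by_cases hV : Hv z
              · exact Or.inr (Or.inr (Or.inr (Or.inr (Or.inr hV))))
              · exact Or.inl ⟨hz, hU, hO, hV⟩
          · simp only [U] at hU
            tauto
      have h3 : cnt E (fun z => G.Adj v z ∨ W z ∨ t ^ 10 * X.card ≤ cnt X (G.Adj z) ∨
        (U z ∧ Old l z) ∨ Hv z) ≤ _ := cnt_le_add fun _ _ h => h
      have h4 : cnt E (fun z => W z ∨ t ^ 10 * X.card ≤ cnt X (G.Adj z) ∨
        (U z ∧ Old l z) ∨ Hv z) ≤ _ := cnt_le_add fun _ _ h => h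
      have h5 : cnt E (fun z => t ^ 10 * X.card ≤ cnt X (G.Adj z) ∨
        (U z ∧ Old l z) ∨ Hv z) ≤ _ := cnt_le_add fun _ _ h => h
      have h6 : cnt E (fun z => (U z ∧ Old l z) ∨ Hv z) ≤ _ := cnt_le_add fun _ _ h => h
      have h7 := h.deg v hv
      have h8 : cnt E (fun z => t ^ 10 * X.card ≤ cnt X (G.Adj z)) ≤ t ^ 290 * n := by
        apply cnt_heavy_le (d := t ^ 300 * n) (by positivity) hXpos
        · intro b hb
          simpa only [G.adj_comm] using h.deg b (hXE hb)
        · apply le_of_eq; ring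
      have a1 := pow_mul_le_div ht ht1 hn.le (show 204 + 1 ≤ 300 by norm_num)
      have a2 := pow_mul_le_div ht ht1 hn.le (show 204 + 1 ≤ 205 by norm_num)
      have a3 := pow_mul_le_div ht ht1 hn.le (show 204 + 1 ≤ 212 by norm_num)
      have a4 := pow_mul_le_div ht ht1 hn.le (show 204 + 1 ≤ 290 by norm_num)
      have a5 := pow_mul_le_div ht ht1 hn.le (show 204 + 1 ≤ 294 by norm_num)
      have a6 := pow_mul_le_div ht ht1 hn.le (show 204 + 1 ≤ 211 by norm_num)
      have a7 : 0 < t ^ 204 * n := by positivity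
      linarith
    obtain ⟨R, hRX, hR1, hR2⟩ := exists_subset_intermediate H (c := t ^ 212 * n) (d := t ^ 300 * n)
      (by positivity) (by simp [H, cnt, fil]) Xg (by
        intro s _ a ha
        have h1 : H (insert a s) ≤ H s + cnt E (G.Adj a) := by
          apply cnt_le_add
          rintro z - ⟨⟨r, hr, hrz⟩, hz⟩
          rcases Finset.mem_insert.1 hr with rfl | hr
          · exact Or.inr hrz
          · exact Or.inl ⟨⟨r, hr, hrz⟩, hz⟩
        have h2 := h.deg a (hXE (fil_subset _ _ ha))
        linarith) hH
    let F := fil E (fun z => (∃ r ∈ R, G.Adj r z) ∧ U z ∧ ¬ Old l z ∧ ¬ Hv z)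
    have hFE : F ⊆ E := fil_subset _ _
    obtain ⟨f, hf, hf'⟩ := h.exists_block (F := F) hFE hR1
    have hF : ∀ z ∈ F, z ∈ E ∧ (∃ r ∈ R, G.Adj r z) ∧ U z ∧ ¬ Old l z ∧ ¬ Hv z :=
      fun z hz => mem_fil.1 hz
    obtain ⟨x, hxR, hxf⟩ := (hF f hf).2.1
    have hpar : ∀ b, ∃ r, b ∈ F → r ∈ R ∧ G.Adj r b := by
      intro b
      by_cases hb : b ∈ F
      · obtain ⟨r, hr, hrb⟩ := (hF b hb).2.1
        exact ⟨r, fun _ => ⟨hr, hrb⟩⟩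
      · exact ⟨b, fun hb' => absurd hb' hb⟩
    choose par hpar using hpar
    have hthin : cnt F (G.Adj x) < t ^ 813 * n := by
      refine lt_of_le_of_lt (cnt_le_of_subset hFE ?_) (hX x (fil_subset _ _ (hRX hxR))).2
      intro z hz hqz
      exact ⟨hqz, (hF z hz).2.2.1.1, (hF z hz).2.2.1.2.1⟩
    have hRX' : R ⊆ X := hRX.trans (fil_subset _ _)
    refine ⟨⟨x, f, fil F (fun z => G.Adj f z ∧ ¬ G.Adj x z), par, R⟩, ?_, ?_, ?_⟩
    · intro p hp
      rcases List.mem_cons.1 hp with rfl | hp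
      · refine ⟨hxR, hRX', (hF f hf).1, hxf, (hF f hf).2.2.1, (fil_subset _ _).trans hFE, ?_,
          hf' x hthin⟩
        intro b hb
        obtain ⟨hbF, hfb, hxb⟩ := mem_fil.1 hb
        exact ⟨hfb, hxb, (hF b hbF).2.2.1, (hpar b hbF).1, (hpar b hbF).2⟩
      · exact hgood p hp
    · rw [List.pairwise_cons]
      refine ⟨fun o ho => ?_, hrel⟩
      have h1 : ¬ bad o x := fun h => (mem_fil.1 (hRX hxR)).2 ⟨o, ho, h⟩
      have h2 : ∀ z ∈ F, ∀ r ∈ o.R, ¬ G.Adj r z :=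
        fun z hz r hr hrz => (hF z hz).2.2.2.1 ⟨o, ho, r, hr, hrz⟩
      have h3 : ¬ t ^ 5 * o.Y.card ≤ cnt o.Y (G.Adj f) :=
        fun hh => (hF f hf).2.2.2.2 ⟨o, ho, hh⟩
      simp only [bad, not_or, not_le] at h1
      exact ⟨h2 f hf, fun b hb => h2 b (fil_subset _ _ hb), (not_le.1 h3).le, h1.1.le, h1.2.le⟩
    · have h1 : cnt E (fun z => U z ∧ Old (⟨x, f, fil F (fun z => G.Adj f z ∧ ¬ G.Adj x z), par, R⟩
          :: l) z) ≤ cnt E (fun z => U z ∧ Old l z) + cnt E (fun z => ((∃ r ∈ R, G.Adj r z) ∧ U z ∧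
          ¬ Old l z ∧ ¬ Hv z) ∨ Hv z) := by
        apply cnt_le_add
        rintro z - ⟨hU, o, ho, r, hr, hrz⟩
        by_cases hO : Old l z
        · exact Or.inl ⟨hU, hO⟩
        · rcases List.mem_cons.1 ho with rfl | ho
          · by_cases hV : Hv z
            · exact Or.inr (Or.inr hV)
            · exact Or.inr (Or.inl ⟨⟨r, hr, hrz⟩, hU, hO, hV⟩)
          · exact absurd ⟨o, ho, r, hr, hrz⟩ hO
      have h2 : cnt E (fun z => ((∃ r ∈ R, G.Adj r z) ∧ U z ∧ ¬ Old l z ∧ ¬ Hv z) ∨ Hv z) ≤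
        H R + cnt E Hv := cnt_le_add fun _ _ h => h
      have a1 := pow_mul_le_div ht ht1 hn.le (show 212 + 1 ≤ 300 by norm_num)
      have a2 := pow_mul_le_div ht ht1 hn.le (show 212 + 1 ≤ 294 by norm_num)
      have a3 : 0 < t ^ 212 * n := by positivity
      rw [List.length_cons]
      push_cast
      linarith)
  have hlk : (l.length : ℝ) * t ≤ 2 := by rw [hl]; exact hk2
  have := AFam.of_pairwise (G := G) (T := E) l hrel (c := 3 * t ^ 5) (s := t ^ 813 * n)
    (fun p => p.Y) (fun p o y => G.Adj p.f y ∨ G.Adj p.x y ∨ G.Adj (o.par y) p.x) (by positivity)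
    (by
      calc (l.length : ℝ) * (3 * t ^ 5) = (l.length * t) * (3 * t ^ 4) := by ring
        _ ≤ 2 * (3 * t ^ 4) := mul_le_mul_of_nonneg_right hlk (by positivity)
        _ ≤ 1 / 2 := by
          have := pow_le_pow_div ht ht1 (show 0 + 1 ≤ 4 by norm_num)
          norm_num at this
          linarith)
    (fun p hp => (hgood p hp).2.2.2.2.2.1) (fun p hp => (hgood p hp).2.2.2.2.2.2.2)
    (by
      intro q hq p hp hR
      have h1 : cnt p.Y (fun y => G.Adj q.f y ∨ G.Adj q.x y ∨ G.Adj (p.par y) q.x) ≤ _ :=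
        cnt_le_add fun _ _ h => h
      have h3 : cnt p.Y (fun y => G.Adj q.x y ∨ G.Adj (p.par y) q.x) ≤ _ :=
        cnt_le_add fun _ _ h => h
      have h2 := hR.2.2
      linarith)
    (by
      intro q hq p hp hR x hx y hy hbad
      simp only [not_or] at hbad
      obtain ⟨r1, r2, -⟩ := hR
      obtain ⟨q1, q2, q3, q4, q5, q6, q7, -⟩ := hgood q hq
      obtain ⟨p1, p2, p3, p4, p5, p6, p7, -⟩ := hgood p hp
      obtain ⟨x1, x2, x3, x4, x5⟩ := q7 x hx
      obtain ⟨y1, y2, y3, y4, y5⟩ := p7 y hy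
      refine ⟨?_, fun hxy => ?_⟩
      · rintro rfl
        exact r2 x hx _ y4 y5
      · exact h.noC6 v q.x q.f x y (p.par y) (hX _ (q2 q1)).1 q4 x1 hxy y5.symm
          (hX _ (p2 y4)).1.symm q5.1 x3.1 y3.1 x2 hbad.2.1 (fun h => hbad.2.2 h.symm) hbad.1
          (fun h => r1 _ y4 h.symm) (fun h => r2 x hx _ y4 h.symm))
  exact this.mono le_rfl le_rfl (by rw [hl]; exact hk1)
end

section
open scoped Classical

variable {V : Type} {G : SimpleGraph V} {E : Finset V} {n t : ℝ} {C : ℕ}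

lemma cnt_exists_fin_le {k : ℕ} (A : Finset V) (bad : Fin k → V → Prop) (c : ℝ)
    (h : ∀ i, cnt A (bad i) ≤ c) : cnt A (fun z => ∃ i, bad i z) ≤ k * c := by
  have := cnt_exists_list_le (List.finRange k) A bad c fun i _ => h i
  simpa using this

/-- Blocks `B i`, each inside the neighbourhood of a neighbour `a i` of `v`, with `a` stable. -/
lemma Setting.exists_chain (h : Setting G E n t C) (hN : NonClosed G E n t C) {v : V} (hv : v ∈ E)
    {X : Finset V} (hXE : X ⊆ E) (hX : ∀ a ∈ X, G.Adj v a)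
    (hXc : 2 * (t ^ (16 * C + 602) * n) ≤ X.card) (hXd : Sparse G (t ^ 16) X) (k : ℕ)
    (hk : k * t ^ 4 ≤ 2) :
    ∃ (a : Fin k → V) (B : Fin k → Finset V), (∀ i, a i ∈ X) ∧ (∀ i, B i ⊆ E) ∧
      (∀ i, ∀ b ∈ B i, G.Adj (a i) b ∧ ¬ G.Adj v b) ∧ (∀ i, t ^ 813 * n ≤ (B i).card) ∧
      ∀ i j, i < j → ¬ G.Adj (a j) (a i) ∧
        (∀ b ∈ B i, ¬ G.Adj (a j) b ∧ cnt (B j) (G.Adj b) ≤ t ^ 50 * (B j).card) ∧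
        cnt (B j) (G.Adj (a i)) ≤ t ^ 5 * (B j).card := by
  have hn := h.hn
  have ht := h.ht
  have ht1 := h.ht1
  have hp : 0 < t ^ (16 * C + 602) * n := by positivity
  have hXpos : (0 : ℝ) < X.card := by linarith
  let Good : V × Finset V → Prop := fun p =>
    p.1 ∈ X ∧ p.2 ⊆ E ∧
      (∀ b ∈ p.2, G.Adj p.1 b ∧ ¬ G.Adj v b ∧ cnt X (G.Adj b) ≤ t ^ 10 * X.card) ∧
      t ^ 813 * n ≤ p.2.card
  let Rel : V × Finset V → V × Finset V → Prop := fun p o =>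
    ¬ G.Adj o.1 p.1 ∧
        (∀ b ∈ p.2, ¬ G.Adj o.1 b ∧ cnt o.2 (G.Adj b) ≤ t ^ 50 * o.2.card) ∧
        cnt o.2 (G.Adj p.1) ≤ t ^ 5 * o.2.card
  have hBpos : ∀ p, Good p → (0 : ℝ) < p.2.card := fun p hp =>
    lt_of_lt_of_le (by positivity) hp.2.2.2
  obtain ⟨l, hl, hgood, hrel⟩ := exists_list_of_step
    (fun l => (∀ p ∈ l, Good p) ∧ l.Pairwise Rel) k ⟨by simp, by simp⟩ (by
    rintro l hlk ⟨hgood, hrel⟩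
    have hlk' : (l.length : ℝ) * t ^ 4 ≤ 2 := by
      have h1 : (l.length : ℝ) ≤ k := by exact_mod_cast hlk.le
      have h2 : 0 < t ^ 4 := by positivity
      nlinarith
    let bad : V × Finset V → V → Prop := fun o x =>
      G.Adj o.1 x ∨ t ^ 5 * o.2.card ≤ cnt o.2 (G.Adj x)
    have hbad : cnt X (fun x => ∃ o ∈ l, bad o x) ≤ l.length * (2 * (t ^ 5 * X.card)) := by
      apply cnt_exists_list_le
      intro o ho
      have ho' := hgood o ho
      have h1 : cnt X (bad o) ≤ _ := cnt_le_add fun _ _ h => h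
      have h6 := hXd _ ho'.1
      have h7 : cnt X (fun x => t ^ 5 * o.2.card ≤ cnt o.2 (G.Adj x)) ≤ t ^ 5 * X.card := by
        apply cnt_heavy_le (d := t ^ 10 * X.card) (by positivity) (hBpos o ho')
        · intro b hb
          simpa only [G.adj_comm] using (ho'.2.2.1 b hb).2.2
        · apply le_of_eq; ring
      have a1 := pow_mul_le_div ht ht1 hXpos.le (show 5 + 1 ≤ 16 by norm_num)
      have a2 : 0 < t ^ 5 * (X.card : ℝ) := by positivity
      linarith
    let W : V → Prop := fun z => t ^ 10 * X.card ≤ cnt X (G.Adj z) ∨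
      ∃ o ∈ l, G.Adj o.1 z ∨ t ^ 50 * o.2.card ≤ cnt o.2 (G.Adj z)
    have hW : cnt E W ≤ t ^ 205 * n := by
      have h1 : cnt E (fun z => t ^ 10 * X.card ≤ cnt X (G.Adj z)) ≤ t ^ 290 * n := by
        apply cnt_heavy_le (d := t ^ 300 * n) (by positivity) hXpos
        · intro b hb
          simpa only [G.adj_comm] using h.deg b (hXE hb)
        · apply le_of_eq; ring
      have h2 : cnt E (fun z => ∃ o ∈ l, G.Adj o.1 z ∨ t ^ 50 * o.2.card ≤ cnt o.2 (G.Adj z)) ≤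
          l.length * (2 * (t ^ 250 * n)) := by
        apply cnt_exists_list_le
        intro o ho
        have ho' := hgood o ho
        have h3 : cnt E (fun z => G.Adj o.1 z ∨ t ^ 50 * o.2.card ≤ cnt o.2 (G.Adj z)) ≤ _ :=
          cnt_le_add fun _ _ h => h
        have h5 := h.deg _ (hXE ho'.1)
        have h7 : cnt E (fun z => t ^ 50 * o.2.card ≤ cnt o.2 (G.Adj z)) ≤ t ^ 250 * n := by
          apply cnt_heavy_le (d := t ^ 300 * n) (by positivity) (hBpos o ho')
          · intro b hb
            simpa only [G.adj_comm] using h.deg b (ho'.2.1 hb)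
          · apply le_of_eq; ring
        have a1 := pow_mul_le_div ht ht1 hn.le (show 250 + 1 ≤ 300 by norm_num)
        have a3 : 0 < t ^ 250 * n := by positivity
        linarith
      have h3 : cnt E W ≤ _ := cnt_le_add fun _ _ h => h
      have a1 := pow_mul_le_div ht ht1 hn.le (show 205 + 1 ≤ 290 by norm_num)
      have a2 := pow_mul_le_div ht ht1 hn.le (show 205 + 1 ≤ 246 by norm_num)
      have a3 : (l.length : ℝ) * (2 * (t ^ 250 * n)) ≤ 2 * (2 * (t ^ 246 * n)) := by
        calc (l.length : ℝ) * (2 * (t ^ 250 * n)) = (l.length * t ^ 4) * (2 * (t ^ 246 * n)) := by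
              ring
          _ ≤ 2 * (2 * (t ^ 246 * n)) := mul_le_mul_of_nonneg_right hlk' (by positivity)
      have a4 : 0 < t ^ 205 * n := by positivity
      linarith
    have hXg : (X.card : ℝ) / 2 ≤ (fil X (fun x => ¬ ∃ o ∈ l, bad o x)).card := by
      have h1 : (X.card : ℝ) ≤ cnt X (fun x => ¬ ∃ o ∈ l, bad o x) +
        cnt X (fun x => ∃ o ∈ l, bad o x) := card_le_cnt_add fun _ _ => (em _).symm
      have a3 : (l.length : ℝ) * (2 * (t ^ 5 * X.card)) ≤ X.card / 2 := by
        calc (l.length : ℝ) * (2 * (t ^ 5 * X.card)) =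
              (l.length * t ^ 4) * (2 * (t ^ 1 * X.card)) := by ring
          _ ≤ 2 * (2 * (t ^ 1 * X.card)) := mul_le_mul_of_nonneg_right hlk' (by positivity)
          _ ≤ X.card / 2 := by
            have := pow_mul_le_div ht ht1 hXpos.le (show 0 + 1 ≤ 1 by norm_num)
            linarith
      rw [card_fil]
      linarith
    obtain ⟨a, ha, ha'⟩ := hN.exists_mem hv hW ((fil_subset _ _).trans hXE)
      (fun a ha => hX a (fil_subset _ _ ha)) (by linarith)
    rw [mem_fil] at ha
    have hB : ∀ b ∈ fil E (fun z => G.Adj a z ∧ ¬ G.Adj v z ∧ ¬ W z), G.Adj a b ∧ ¬ G.Adj v b ∧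
      ¬ W b := fun b hb => (mem_fil.1 hb).2
    refine ⟨(a, fil E (fun z => G.Adj a z ∧ ¬ G.Adj v z ∧ ¬ W z)), ?_, ?_⟩
    · intro p hp
      rcases List.mem_cons.1 hp with rfl | hp
      · refine ⟨ha.1, fil_subset _ _, fun b hb => ⟨(hB b hb).1, (hB b hb).2.1, ?_⟩, ha'⟩
        exact (not_le.1 fun h => (hB b hb).2.2 (Or.inl h)).le
      · exact hgood p hp
    · rw [List.pairwise_cons]
      refine ⟨fun o ho => ?_, hrel⟩
      have h1 : ¬ bad o a := fun h => ha.2 ⟨o, ho, h⟩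
      have h2 : ∀ z, ¬ W z → ¬ (G.Adj o.1 z ∨ t ^ 50 * o.2.card ≤ cnt o.2 (G.Adj z)) :=
        fun z hz h => hz (Or.inr ⟨o, ho, h⟩)
      simp only [bad, not_or, not_le] at h1 h2
      exact ⟨h1.1, fun b hb => ⟨(h2 b (hB b hb).2.2).1, (h2 b (hB b hb).2.2).2.le⟩, h1.2.le⟩)
  subst hl
  have hg : ∀ i : Fin l.length, Good l[i] := fun i => hgood _ (List.getElem_mem _)
  refine ⟨fun i => l[i].1, fun i => l[i].2, fun i => (hg i).1, fun i => (hg i).2.1,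
    fun i b hb => ⟨((hg i).2.2.1 b hb).1, ((hg i).2.2.1 b hb).2.1⟩, fun i => (hg i).2.2.2,
    fun i j hij => List.pairwise_iff_getElem.1 hrel i j i.2 j.2 hij⟩

lemma Setting.of_chain (h : Setting G E n t C) (hN : NonClosed G E n t C) {v : V} (hv : v ∈ E)
    {k : ℕ} (hk : k * t ^ 4 ≤ 2) (hk' : 1 ≤ k * t ^ 4) (a : Fin k → V) (B : Fin k → Finset V)
    (ha : ∀ i, a i ∈ E) (hva : ∀ i, G.Adj v (a i)) (hB : ∀ i, B i ⊆ E)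
    (haB : ∀ i, ∀ b ∈ B i, G.Adj (a i) b ∧ ¬ G.Adj v b) (hBc : ∀ i, t ^ 813 * n ≤ (B i).card)
    (hR : ∀ i j, i < j → ¬ G.Adj (a j) (a i) ∧
        (∀ b ∈ B i, ¬ G.Adj (a j) b ∧ cnt (B j) (G.Adj b) ≤ t ^ 50 * (B j).card) ∧
        cnt (B j) (G.Adj (a i)) ≤ t ^ 5 * (B j).card) :
    AFam G E (t ^ 832 * n) (1 / t) := by
  have hn := h.hn
  have ht := h.ht
  have ht1 := h.ht1
  have hC := h.hC
  have hBpos : ∀ i, (0 : ℝ) < (B i).card := fun i => lt_of_lt_of_le (by positivity) (hBc i)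
  have haa : ∀ i j, i ≠ j → ¬ G.Adj (a i) (a j) := by
    intro i j hij hadj
    rcases lt_or_gt_of_ne hij with h1 | h1
    · exact (hR i j h1).1 hadj.symm
    · exact (hR j i h1).1 hadj
  obtain ⟨B', hB'⟩ : ∃ B' : Fin k → Finset V, ∀ j, B' j = fil (B j) (fun b => ∀ i, i < j →
    ¬ G.Adj (a i) b ∧ cnt (B i) (G.Adj b) < t ^ 25 * (B i).card) := ⟨_, fun _ => rfl⟩
  have hB'B : ∀ j, B' j ⊆ B j := fun j => by rw [hB']; exact fil_subset _ _
  have hB'c : ∀ j, ((B j).card : ℝ) / 2 ≤ (B' j).card := by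
    intro j
    have h1 : ((B j).card : ℝ) ≤ (B' j).card + cnt (B j) (fun b => ∃ i, i < j ∧
        (G.Adj (a i) b ∨ t ^ 25 * (B i).card ≤ cnt (B i) (G.Adj b))) := by
      rw [hB']
      apply card_le_cnt_add
      intro z _
      by_contra! hz
      obtain ⟨⟨i, hi, hi'⟩, h2⟩ := hz
      exact absurd (hi' (h2 i hi).1) (not_le.2 (h2 i hi).2)
    have h2 : cnt (B j) (fun b => ∃ i, i < j ∧
        (G.Adj (a i) b ∨ t ^ 25 * (B i).card ≤ cnt (B i) (G.Adj b))) ≤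
        k * (2 * (t ^ 5 * (B j).card)) := by
      apply cnt_exists_fin_le
      intro i
      by_cases hij : i < j
      · have h3 : cnt (B j) (fun b => i < j ∧
            (G.Adj (a i) b ∨ t ^ 25 * (B i).card ≤ cnt (B i) (G.Adj b))) ≤ cnt (B j) (G.Adj (a i)) +
            cnt (B j) (fun b => t ^ 25 * (B i).card ≤ cnt (B i) (G.Adj b)) :=
          cnt_le_add fun _ _ h => h.2
        have h4 := (hR i j hij).2.2
        have h5 : cnt (B j) (fun b => t ^ 25 * (B i).card ≤ cnt (B i) (G.Adj b)) ≤
            t ^ 25 * (B j).card := by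
          apply cnt_heavy_le (d := t ^ 50 * (B j).card) (by positivity) (hBpos i)
          · intro b hb
            simpa only [G.adj_comm] using ((hR i j hij).2.1 b hb).2
          · apply le_of_eq; ring
        have a1 := pow_mul_le_div ht ht1 (hBpos j).le (show 5 + 1 ≤ 25 by norm_num)
        have a2 : 0 < t ^ 5 * ((B j).card : ℝ) := mul_pos (by positivity) (hBpos j)
        linarith
      · have : cnt (B j) (fun b => i < j ∧
            (G.Adj (a i) b ∨ t ^ 25 * (B i).card ≤ cnt (B i) (G.Adj b))) = 0 := by
          simp [cnt, fil, hij]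
        rw [this]
        positivity
    have a3 : (k : ℝ) * (2 * (t ^ 5 * (B j).card)) ≤ (B j).card / 2 := by
      calc (k : ℝ) * (2 * (t ^ 5 * (B j).card)) = (k * t ^ 4) * (2 * (t ^ 1 * (B j).card)) := by
            ring
        _ ≤ 2 * (2 * (t ^ 1 * (B j).card)) := mul_le_mul_of_nonneg_right hk (by positivity)
        _ ≤ (B j).card / 2 := by
          have := pow_mul_le_div ht ht1 (hBpos j).le (show 0 + 1 ≤ 1 by norm_num)
          linarith [hBpos j]
    linarith
  have hsep : ∀ i j, i ≠ j → ∀ x ∈ B' j, ¬ G.Adj (a i) x ∧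
      cnt (B i) (G.Adj x) ≤ t ^ 25 * (B i).card := by
    intro i j hij x hx
    rcases lt_or_gt_of_ne hij with h1 | h1
    · rw [hB', mem_fil] at hx
      exact ⟨(hx.2 i h1).1, (hx.2 i h1).2.le⟩
    · have h2 := (hR j i h1).2.1 x (hB'B j hx)
      have a1 := pow_mul_le_div ht ht1 (hBpos i).le (show 25 + 1 ≤ 50 by norm_num)
      have a2 : 0 < t ^ 25 * ((B i).card : ℝ) := mul_pos (by positivity) (hBpos i)
      exact ⟨h2.1, by linarith⟩
  obtain ⟨g, hg⟩ : ∃ g : Fin k → Finset V, ∀ j, g j = fil (B' j) (fun b =>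
    t ^ 18 * (B j).card ≤ cnt (B' j) (fun z => ¬ G.Adj b z)) := ⟨_, fun _ => rfl⟩
  have hgB : ∀ j, g j ⊆ B' j := fun j => by rw [hg]; exact fil_subset _ _
  by_cases hcase : ∃ j, ((g j).card : ℝ) < (B' j).card / 2
  · obtain ⟨j, hj⟩ := hcase
    let Q := fil (B' j) (fun b => ¬ t ^ 18 * (B j).card ≤ cnt (B' j) (fun z => ¬ G.Adj b z))
    have hQc : ((B j).card : ℝ) / 4 ≤ Q.card := by
      have h1 : ((B' j).card : ℝ) ≤ (g j).card + Q.card := by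
        rw [hg]
        exact card_le_cnt_add fun _ _ => em _
      have h2 := hB'c j
      linarith
    have hQB : Q ⊆ B' j := fil_subset _ _
    have hQd : Sparse Gᶜ (t ^ 16) Q := by
      intro x hx
      have h1 := not_le.1 (mem_fil.1 hx).2
      have h2 : cnt Q (Gᶜ.Adj x) ≤ cnt (B' j) (fun z => ¬ G.Adj x z) :=
        cnt_le_of_subset hQB fun z _ hz => ((SimpleGraph.compl_adj _ _ _).1 hz).2
      have a1 := pow_mul_le_div ht ht1 (hBpos j).le (show 16 + 1 ≤ 18 by norm_num)
      have a2 : t ^ 16 * ((B j).card / 4 : ℝ) ≤ t ^ 16 * Q.card :=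
        mul_le_mul_of_nonneg_left hQc (by positivity)
      have a3 : 0 < t ^ 16 * ((B j).card : ℝ) := mul_pos (by positivity) (hBpos j)
      linarith
    have hQE : Q ⊆ E := hQB.trans ((hB'B j).trans (hB j))
    have hm := pow_mul_le_div ht ht1 hn.le (show 813 + 1 ≤ 16 * C + 602 by omega)
    have a0 : 0 < t ^ 813 * n := by positivity
    have h1 := h.nonclosed_dense hN (ha j) hQE (fun q hq => (haB j q (hB'B j (hQB hq))).1)
      (by linarith [hBc j]) hQd
    have a1 := pow_mul_le_div ht ht1 hn.le (show 813 + 1 ≤ 832 by norm_num)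
    exact h1.mono le_rfl (by linarith) le_rfl
  · push Not at hcase
    let Out : V → Prop := fun z => ¬ G.Adj v z ∧ ∀ i, ¬ G.Adj (a i) z
    have hout : ∀ j, t ^ 2 * n / 4 ≤ cnt E (fun z => Out z ∧ ∃ b ∈ g j, G.Adj b z) := by
      intro j
      have hgE : g j ⊆ E := (hgB j).trans ((hB'B j).trans (hB j))
      have a0 := pow_mul_le_div ht ht1 hn.le (show 813 + 1 ≤ 832 by norm_num)
      have a1 : 0 < t ^ 813 * n := by positivity
      have h1 := h.expand' (g j) hgE (by linarith [hcase j, hB'c j, hBc j])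
      have h2 : cnt E (fun z => z ∈ g j ∨ ∃ x ∈ g j, G.Adj x z) ≤
          cnt E (fun z => Out z ∧ ∃ b ∈ g j, G.Adj b z) +
          cnt E (fun z => G.Adj v z ∨ ∃ i, G.Adj (a i) z) := by
        apply cnt_le_add
        rintro z - (hz | hz)
        · exact Or.inr (Or.inr ⟨j, (haB j z (hB'B j (hgB j hz))).1⟩)
        · by_cases hO : G.Adj v z ∨ ∃ i, G.Adj (a i) z
          · exact Or.inr hO
          · push Not at hO
            exact Or.inl ⟨hO, hz⟩
      have h3 : cnt E (fun z => G.Adj v z ∨ ∃ i, G.Adj (a i) z) ≤ _ := cnt_le_add fun _ _ h => h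
      have h4 := h.deg v hv
      have h5 := cnt_exists_fin_le E (fun i => G.Adj (a i)) _ (fun i => h.deg _ (ha i))
      have h6 : (k : ℝ) * (t ^ 300 * n) ≤ 2 * (t ^ 296 * n) := by
        calc (k : ℝ) * (t ^ 300 * n) = (k * t ^ 4) * (t ^ 296 * n) := by ring
          _ ≤ 2 * (t ^ 296 * n) := mul_le_mul_of_nonneg_right hk (by positivity)
      have a2 := pow_mul_le_div ht ht1 hn.le (show 2 + 1 ≤ 300 by norm_num)
      have a3 := pow_mul_le_div ht ht1 hn.le (show 2 + 1 ≤ 296 by norm_num)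
      have a4 : 0 < t ^ 2 * n := by positivity
      linarith
    obtain ⟨c, hcE, hc⟩ : ∃ c ∈ E, 1 / t ≤ cnt (Finset.univ : Finset (Fin k))
        (fun j => Out c ∧ ∃ b ∈ g j, G.Adj b c) := by
      by_contra! hcon
      have h1 := sum_cnt_comm E (Finset.univ : Finset (Fin k))
        (fun z j => Out z ∧ ∃ b ∈ g j, G.Adj b z)
      have h2 : ∑ z ∈ E, cnt (Finset.univ : Finset (Fin k))
          (fun j => Out z ∧ ∃ b ∈ g j, G.Adj b z) ≤ E.card * (1 / t) := by
        rw [← nsmul_eq_mul]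
        exact Finset.sum_le_card_nsmul _ _ _ fun z hz => (hcon z hz).le
      have h3 : (k : ℝ) * (t ^ 2 * n / 4) ≤ ∑ j : Fin k, cnt E
          (fun z => Out z ∧ ∃ b ∈ g j, G.Adj b z) := by
        have := Finset.card_nsmul_le_sum (Finset.univ : Finset (Fin k)) _ _ fun j _ => hout j
        simpa using this
      have h4 : (k : ℝ) * (t ^ 2 * n / 4) ≤ n * (1 / t) := by
        have := mul_le_mul_of_nonneg_right h.card_le (by positivity : 0 ≤ 1 / t)
        linarith
      have h5 : (k : ℝ) * (t ^ 2 * n / 4) * t ^ 2 ≤ n * (1 / t) * t ^ 2 :=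
        mul_le_mul_of_nonneg_right h4 (by positivity)
      have h6 : n * (1 / t) * t ^ 2 = n * t := by field_simp
      have h7 : (k : ℝ) * (t ^ 2 * n / 4) * t ^ 2 = (k * t ^ 4) * (n / 4) := by ring
      have h8 : 1 * (n / 4) ≤ (k * t ^ 4) * (n / 4) :=
        mul_le_mul_of_nonneg_right hk' (by positivity)
      nlinarith
    let I := fil (Finset.univ : Finset (Fin k)) (fun j => Out c ∧ ∃ b ∈ g j, G.Adj b c)
    have hI : ∀ j : I, ∃ b ∈ g j, G.Adj b c := fun j => (mem_fil.1 j.2).2.2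
    choose b hb hbc using hI
    have hne : ∃ j : I, True := by
      have : 0 < cnt (Finset.univ : Finset (Fin k)) (fun j => Out c ∧ ∃ b ∈ g j, G.Adj b c) :=
        lt_of_lt_of_le (by positivity) hc
      obtain ⟨j, hj, hj'⟩ := exists_of_cnt_pos this
      exact ⟨⟨j, mem_fil.2 ⟨hj, hj'⟩⟩, trivial⟩
    have hOut : Out c := by
      obtain ⟨j, -⟩ := hne
      exact (mem_fil.1 j.2).2.1
    have hbB : ∀ j : I, b j ∈ B' j := fun j => hgB _ (hb j)
    have hbB2 : ∀ j : I, b j ∈ B j := fun j => hB'B _ (hbB j)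
    have hne' : ∀ i j : I, i ≠ j → (i : Fin k) ≠ j := fun i j hij h => hij (Subtype.ext h)
    have hbb : ∀ i j : I, i ≠ j → G.Adj (b i) (b j) := by
      intro i j hij
      by_contra hnadj
      have hij' := hne' i j hij
      exact h.noC6 v (a i) (b i) c (b j) (a j) (hva _) (haB i _ (hbB2 i)).1 (hbc i) (hbc j).symm
        (haB j _ (hbB2 j)).1.symm (hva _).symm (haB i _ (hbB2 i)).2 hOut.1 (haB j _ (hbB2 j)).2
        (hOut.2 _) (hsep i j hij' _ (hbB j)).1 (haa _ _ hij') hnadj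
        (fun h => (hsep j i hij'.symm _ (hbB i)).1 h.symm) (fun h => hOut.2 j h.symm)
    refine ⟨I, inferInstance, fun j => fil (B' j) (fun y => ∀ i : I, ¬ G.Adj (b i) y), ?_, ?_, ?_, ?_⟩
    · rw [Fintype.card_coe]
      exact hc
    · intro j
      exact (fil_subset _ _).trans ((hB'B j).trans (hB j))
    · intro j
      have h1 : t ^ 18 * (B j).card ≤ cnt (B' j) (fun z => ¬ G.Adj (b j) z) := by
        have := hb j
        rw [hg, mem_fil] at this
        exact this.2
      have h2 : cnt (B' j) (fun z => ¬ G.Adj (b j) z) ≤ cnt (B' j) (fun y => ∀ i : I,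
          ¬ G.Adj (b i) y) + cnt (B' j) (fun y => ∃ i : Fin k, ∃ hi : i ∈ I, i ≠ j ∧
          G.Adj (b ⟨i, hi⟩) y) := by
        apply cnt_le_add
        intro z _ hz
        by_cases hz' : ∀ i : I, ¬ G.Adj (b i) z
        · exact Or.inl hz'
        · push Not at hz'
          obtain ⟨i, hi⟩ := hz'
          refine Or.inr ⟨i, i.2, fun hij => hz ?_, hi⟩
          have : i = j := Subtype.ext hij
          rw [← this]
          exact hi
      have h3 : cnt (B' j) (fun y => ∃ i : Fin k, ∃ hi : i ∈ I, i ≠ j ∧ G.Adj (b ⟨i, hi⟩) y) ≤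
          k * (t ^ 25 * (B j).card) := by
        apply cnt_exists_fin_le
        intro i
        by_cases hi : ∃ _ : i ∈ I, i ≠ j
        · obtain ⟨hi1, hi2⟩ := hi
          refine le_trans ?_ (hsep j i hi2.symm _ (hbB ⟨i, hi1⟩)).2
          exact cnt_le_of_subset (hB'B j) fun z _ ⟨_, _, hz⟩ => hz
        · have : cnt (B' j) (fun y => ∃ hi : i ∈ I, i ≠ j ∧ G.Adj (b ⟨i, hi⟩) y) ≤
              cnt (∅ : Finset V) (fun _ => True) := by
            have h0 : fil (B' j) (fun y => ∃ hi : i ∈ I, i ≠ j ∧ G.Adj (b ⟨i, hi⟩) y) = ∅ := by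
              apply Finset.eq_empty_of_forall_notMem
              intro z hz
              obtain ⟨-, h1, h2, -⟩ := mem_fil.1 hz
              exact hi ⟨h1, h2⟩
            unfold cnt
            rw [h0]
            simp
          have h0 : cnt (∅ : Finset V) (fun _ => True) = 0 := by simp [cnt, fil]
          rw [h0] at this
          exact this.trans (by positivity)
      have h4 : (k : ℝ) * (t ^ 25 * (B j).card) ≤ 2 * (t ^ 21 * (B j).card) := by
        calc (k : ℝ) * (t ^ 25 * (B j).card) = (k * t ^ 4) * (t ^ 21 * (B j).card) := by ring
          _ ≤ 2 * (t ^ 21 * (B j).card) := mul_le_mul_of_nonneg_right hk (by positivity)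
      have a1 := pow_mul_le_div ht ht1 (hBpos j).le (show 18 + 1 ≤ 21 by norm_num)
      have a2 := pow_mul_le_div ht ht1 (hBpos j).le (show 18 + 1 ≤ 19 by norm_num)
      have a3 : 0 < t ^ 18 * ((B j).card : ℝ) := mul_pos (by positivity) (hBpos j)
      have a4 : t ^ 832 * n ≤ t ^ 19 * (B j).card := by
        calc t ^ 832 * n = t ^ 19 * (t ^ 813 * n) := by ring
          _ ≤ t ^ 19 * (B j).card := mul_le_mul_of_nonneg_left (hBc j) (by positivity)
      rw [card_fil]
      linarith
    · intro i j hij x hx y hy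
      rw [mem_fil] at hx hy
      have hij' := hne' i j hij
      have hx2 := haB i x (hB'B _ hx.1)
      have hy2 := haB j y (hB'B _ hy.1)
      have hxs := hsep j i hij'.symm x hx.1
      have hys := hsep i j hij' y hy.1
      refine ⟨?_, fun hxy => ?_⟩
      · rintro rfl
        exact hys.1 hx2.1
      · exact h.noC6 (a i) x y (a j) (b j) (b i) hx2.1 hxy hy2.1.symm (haB j _ (hbB2 j)).1
          (hbb j i hij.symm) (haB i _ (hbB2 i)).1.symm hys.1 (haa _ _ hij')
          (hsep i j hij' _ (hbB j)).1 (fun h => hxs.1 h.symm) (fun h => hx.2 j h.symm)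
          (fun h => hx.2 i h.symm) (fun h => hy.2 j h.symm) (fun h => hy.2 i h.symm)
          (hsep j i hij'.symm _ (hbB i)).1
end

section
open scoped Classical

variable {V : Type} {G : SimpleGraph V} {E : Finset V} {n t : ℝ} {C : ℕ}

lemma Setting.exists_family (h : Setting G E n t C) : AFam G E (t ^ 832 * n) (1 / t) := by
  have hn := h.hn
  have ht := h.ht
  have ht1 := h.ht1
  have hC := h.hC
  have hhalf : t ^ 832 * n ≤ t ^ 813 * n / 2 := by
    have a1 := pow_mul_le_div ht ht1 hn.le (show 813 + 1 ≤ 832 by norm_num)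
    have a2 : 0 < t ^ 813 * n := by positivity
    linarith
  by_cases hN : NonClosed G E n t C
  · have hEc : t ^ 212 * n ≤ E.card := by
      have a1 := pow_mul_le_div ht ht1 hn.le (show 0 + 1 ≤ 212 by norm_num)
      have := h.card_ge
      linarith
    obtain ⟨v, hv, hv'⟩ := h.stuck E subset_rfl hEc
    obtain ⟨X, hXT, hXc, hXr⟩ := h.nested (fil E (G.Adj v)) (fil_subset _ _)
    have hXE : X ⊆ E := hXT.trans (fil_subset _ _)
    have hXv : ∀ a ∈ X, G.Adj v a := fun a ha => (mem_fil.1 (hXT ha)).2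
    have hXc' : 2 * (t ^ (16 * C + 602) * n) ≤ X.card := by
      have h1 : t ^ (16 * C) * (t ^ 600 * (n / 2)) ≤ X.card := by
        refine le_trans (mul_le_mul_of_nonneg_left ?_ (by positivity)) hXc
        refine le_trans (mul_le_mul_of_nonneg_left h.card_ge (by positivity)) hv'.le
      have h2 : t ^ (16 * C) * (t ^ 600 * (n / 2)) = t ^ (16 * C + 600) * n / 2 := by ring
      have a1 := pow_mul_le_div ht ht1 hn.le (show 16 * C + 600 + 1 ≤ 16 * C + 602 by omega)
      have a2 : 0 < t ^ (16 * C + 600) * n := by positivity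
      linarith
    rcases hXr with hs | hd
    · have ht4 : t ^ 4 ≤ 1 / 100 := by
        have := pow_le_pow_div ht ht1 (show 0 + 1 ≤ 4 by norm_num)
        simpa using this
      have hk : (⌈1 / t ^ 4⌉₊ : ℝ) * t ^ 4 ≤ 2 := ceil_inv_mul_le (by positivity) ht4
      have hk' : 1 ≤ (⌈1 / t ^ 4⌉₊ : ℝ) * t ^ 4 := by
        rw [← div_le_iff₀ (by positivity)]
        exact Nat.le_ceil _
      obtain ⟨a, B, h1, h2, h3, h4, h5⟩ := h.exists_chain hN hv hXE hXv hXc' hs _ hk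
      exact h.of_chain hN hv hk hk' a B (fun i => hXE (h1 i)) (fun i => hXv _ (h1 i)) h2 h3 h4 h5
    · exact (h.nonclosed_dense hN hv hXE hXv hXc' hd).mono le_rfl hhalf le_rfl
  · unfold NonClosed at hN
    push Not at hN
    obtain ⟨v, hv, W, hW, hA⟩ := hN
    obtain ⟨X, hXT, hXc, hXr⟩ := h.nested (fil E (fun a => G.Adj v a ∧
      cnt E (fun z => G.Adj a z ∧ ¬ G.Adj v z ∧ ¬ W z) < t ^ 813 * n)) (fil_subset _ _)
    have hXE : X ⊆ E := hXT.trans (fil_subset _ _)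
    have hXc' : 2 * (t ^ (32 * C + 603) * n) ≤ X.card := by
      have h1 := (mul_le_mul_of_nonneg_left hA (by positivity : 0 ≤ t ^ (16 * C))).trans hXc
      have h2 : t ^ (16 * C) * (t ^ (16 * C + 602) * n) = t ^ (32 * C + 602) * n := by ring
      have a1 := pow_mul_le_div ht ht1 hn.le (show 32 * C + 602 + 1 ≤ 32 * C + 603 by omega)
      have a2 : 0 < t ^ (32 * C + 602) * n := by positivity
      linarith
    have hX := fun a ha => (mem_fil.1 (hXT ha : a ∈ fil E _)).2
    rcases hXr with hs | hd
    · exact (h.closed_sparse hv hW hXE hX hXc' hs).mono le_rfl hhalf le_rfl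
    · exact (h.closed_dense hv hW hXE hX hXc' hd).mono le_rfl hhalf le_rfl

/-- Either there are many large pairwise anticomplete sets, or deleting few vertices leaves a set in
which all large sets expand. -/
lemma exists_expanding (G : SimpleGraph V) {s τ : ℝ} (hτ : 0 ≤ τ) (r : ℕ) (S : Finset V) :
    AFam G S s r ∨ ∃ E ⊆ S, (S.card : ℝ) ≤ E.card + r * τ ∧
      ∀ X ⊆ E, s ≤ X.card → τ ≤ cnt E (fun z => z ∈ X ∨ ∃ x ∈ X, G.Adj x z) := by
  induction r generalizing S with
  | zero => exact Or.inl ⟨Empty, inferInstance, fun i => i.elim, by simp, by simp, by simp, by simp⟩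
  | succ r ih =>
    by_cases hS : ∀ X ⊆ S, s ≤ X.card → τ ≤ cnt S (fun z => z ∈ X ∨ ∃ x ∈ X, G.Adj x z)
    · refine Or.inr ⟨S, subset_rfl, ?_, hS⟩
      have : 0 ≤ ((r + 1 : ℕ) : ℝ) * τ := by positivity
      linarith
    · push Not at hS
      obtain ⟨X, hXS, hXs, hXτ⟩ := hS
      have hcard : (S.card : ℝ) ≤ (fil S (fun z => ¬ (z ∈ X ∨ ∃ x ∈ X, G.Adj x z))).card +
          cnt S (fun z => z ∈ X ∨ ∃ x ∈ X, G.Adj x z) := card_le_cnt_add fun _ _ => (em _).symm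
      rcases ih (fil S (fun z => ¬ (z ∈ X ∨ ∃ x ∈ X, G.Adj x z))) with h | ⟨E, hE, hEc, hE'⟩
      · left
        obtain ⟨ι, hι, B, h1, h2, h3, h4⟩ := h
        have hX : ∀ i, ∀ y ∈ B i, ∀ x ∈ X, x ≠ y ∧ ¬ G.Adj x y := by
          intro i y hy x hx
          have := (mem_fil.1 (h2 i hy)).2
          push Not at this
          exact ⟨fun h => this.1 (h ▸ hx), this.2 x hx⟩
        refine ⟨Option ι, inferInstance, fun o => o.elim X B, ?_, ?_, ?_, ?_⟩
        · rw [Fintype.card_option]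
          push_cast
          linarith
        · rintro (_ | i)
          · exact hXS
          · exact (h2 i).trans (fil_subset _ _)
        · rintro (_ | i)
          · exact hXs
          · exact h3 i
        · rintro (_ | i) (_ | j) hij x hx y hy
          · exact absurd rfl hij
          · exact hX j y hy x hx
          · have := hX i x hx y hy
            exact ⟨this.1.symm, fun h => this.2 h.symm⟩
          · exact h4 i j (fun h => hij (by rw [h])) x hx y hy
      · refine Or.inr ⟨E, hE.trans (fil_subset _ _), ?_, hE'⟩
        push_cast
        linarith

lemma cnt_le_cnt_add_sub {A B : Finset V} (h : A ⊆ B) (P : V → Prop) :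
    cnt B P ≤ cnt A P + (B.card - A.card) := by
  have h1 : fil B P ⊆ fil A P ∪ (B \ A) := by
    intro z hz
    rw [mem_fil] at hz
    rw [Finset.mem_union, mem_fil, Finset.mem_sdiff]
    tauto
  have h2 := (Finset.card_le_card h1).trans (Finset.card_union_le _ _)
  have h3 := Finset.card_sdiff_add_card_eq_card h
  have h4 : ((fil B P).card : ℝ) ≤ (fil A P).card + (B \ A).card := by exact_mod_cast h2
  have h5 : ((B \ A).card : ℝ) + A.card = B.card := by exact_mod_cast h3
  unfold cnt
  linarith

/-- A sparse set without much sparser large subsets contains many large pairwise anticomplete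
sets. -/
lemma exists_family_of_stuck (hG : NoC6 G) (ht : 0 < t) (ht1 : t ≤ 1 / 100) (hC : 100 ≤ C)
    {S : Finset V} (big : 1 ≤ t ^ (32 * C + 619) * S.card) (deg : Sparse G (t ^ 300) S)
    (stuck : ∀ F ⊆ S, t ^ 212 * S.card ≤ F.card → ¬ Sparse G (t ^ 600) F)
    (nested : ∀ T ⊆ S, ∃ X ⊆ T, t ^ (16 * C) * T.card ≤ X.card ∧ Restricted G (t ^ 16) X) :
    AFam G S (t ^ 832 * S.card) (1 / t) ∨ AFam G S (t ^ (32 * C + 603) * S.card) (1 / t ^ 200) := by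
  have hn : (0 : ℝ) < S.card := by
    have h2 : 0 < t ^ (32 * C + 619) := by positivity
    by_contra h3
    have := mul_nonpos_of_nonneg_of_nonpos h2.le (not_lt.1 h3)
    linarith
  have ht200 : t ^ 200 ≤ 1 / 100 := by
    have := pow_le_pow_div ht ht1 (show 0 + 1 ≤ 200 by norm_num)
    simpa using this
  have hr1 := ceil_inv_mul_le ht ht1
  have hr2 := ceil_inv_mul_le (by positivity) ht200
  rcases exists_expanding G (s := t ^ 832 * S.card) (τ := t ^ 2 * S.card) (by positivity)
    ⌈1 / t⌉₊ S with h1 | ⟨E', hE'S, hE'c, hE'⟩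
  · exact Or.inl (h1.mono subset_rfl le_rfl (Nat.le_ceil _))
  rcases exists_expanding G (s := t ^ (32 * C + 603) * S.card) (τ := t ^ 204 * S.card)
    (by positivity) ⌈1 / t ^ 200⌉₊ E' with h1 | ⟨E, hEE', hEc, hE⟩
  · exact Or.inr (h1.mono hE'S le_rfl (Nat.le_ceil _))
  have hES : E ⊆ S := hEE'.trans hE'S
  have b1 : (⌈1 / t⌉₊ : ℝ) * (t ^ 2 * S.card) ≤ 2 * (t ^ 1 * S.card) := by
    calc (⌈1 / t⌉₊ : ℝ) * (t ^ 2 * S.card) = (⌈1 / t⌉₊ * t) * (t ^ 1 * S.card) := by ring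
      _ ≤ 2 * (t ^ 1 * S.card) := mul_le_mul_of_nonneg_right hr1 (by positivity)
  have b2 : (⌈1 / t ^ 200⌉₊ : ℝ) * (t ^ 204 * S.card) ≤ 2 * (t ^ 4 * S.card) := by
    calc (⌈1 / t ^ 200⌉₊ : ℝ) * (t ^ 204 * S.card) =
          (⌈1 / t ^ 200⌉₊ * t ^ 200) * (t ^ 4 * S.card) := by ring
      _ ≤ 2 * (t ^ 4 * S.card) := mul_le_mul_of_nonneg_right hr2 (by positivity)
  have a1 := pow_mul_le_div ht ht1 hn.le (show 0 + 1 ≤ 1 by norm_num)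
  have a2 := pow_mul_le_div ht ht1 hn.le (show 0 + 1 ≤ 4 by norm_num)
  have a3 := pow_mul_le_div ht ht1 hn.le (show 2 + 1 ≤ 4 by norm_num)
  have a4 : 0 < t ^ 2 * (S.card : ℝ) := by positivity
  rw [pow_zero, one_mul] at a1 a2
  have hset : Setting G E S.card t C :=
    { noC6 := hG
      ht := ht
      ht1 := ht1
      hC := hC
      big := big
      deg := fun x hx => (cnt_le_of_subset hES fun _ _ h => h).trans (deg x (hES hx))
      stuck := by
        intro F hF hFc
        have := stuck F (hF.trans hES) hFc
        unfold Sparse at this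
        push Not at this
        exact this
      card_ge := by linarith
      card_le := by exact_mod_cast Finset.card_le_card hES
      expand := hE
      expand' := by
        intro X hX hXc
        have h1 := hE' X (hX.trans hEE') hXc
        have h2 := cnt_le_cnt_add_sub hEE' (fun z => z ∈ X ∨ ∃ x ∈ X, G.Adj x z)
        linarith
      nested := fun T hT => nested T (hT.trans hES) }
  exact Or.inl (hset.exists_family.mono hES le_rfl le_rfl)
end

section
open scoped Classical

variable {V : Type} {G : SimpleGraph V}

lemma exists_embedding {T : Finset V} {c σ : ℝ} (hc0 : 0 < c) (hc1 : c ≤ 1) (hσ : 0 < σ)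
    (hT : ∀ A ⊆ T, ∀ B ⊆ T, Disjoint A B → σ ≤ A.card → σ ≤ B.card →
      (∃ b ∈ B, c * A.card < cnt A (G.Adj b)) ∧ ∃ b ∈ B, c * A.card < cnt A (Gᶜ.Adj b))
    (m : ℕ) (H : Fin m → Fin m → Prop) (A : Fin m → Finset V) (hAT : ∀ i, A i ⊆ T)
    (hAd : ∀ i j, i ≠ j → Disjoint (A i) (A j)) (hA : ∀ i, m * σ < c ^ m * (A i).card) :
    ∃ f : Fin m → V, (∀ i, f i ∈ A i) ∧ ∀ i j, i < j → (G.Adj (f i) (f j) ↔ H i j) := by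
  induction m with
  | zero => exact ⟨fun i => i.elim0, fun i => i.elim0, fun i => i.elim0⟩
  | succ m ih =>
    have hA' : ∀ i, (m + 1 : ℝ) * σ < (A i).card := by
      intro i
      refine lt_of_lt_of_le (by simpa using hA i) ?_
      have : c ^ (m + 1) ≤ 1 := pow_le_one₀ hc0.le hc1
      exact mul_le_of_le_one_left (Nat.cast_nonneg _) this
    have hAσ : ∀ i, σ ≤ (A i).card := by
      intro i
      have h1 := hA' i
      have : 0 ≤ (m : ℝ) * σ := by positivity
      linarith
    let R : Fin m → V → V → Prop := fun j b z =>
      (H 0 j.succ ∧ G.Adj b z) ∨ (¬ H 0 j.succ ∧ Gᶜ.Adj b z)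
    have hbad : ∀ j : Fin m, cnt (A 0) (fun b => ¬ c * (A j.succ).card < cnt (A j.succ) (R j b)) ≤
        σ := by
      intro j
      by_contra hcon
      let B := fil (A 0) (fun b => ¬ c * (A j.succ).card < cnt (A j.succ) (R j b))
      have hd : Disjoint (A j.succ) B :=
        Finset.disjoint_of_subset_right (fil_subset _ _) (hAd _ _ (Fin.succ_ne_zero j))
      obtain ⟨⟨b1, hb1, hb1'⟩, b2, hb2, hb2'⟩ := hT _ (hAT j.succ) B ((fil_subset _ _).trans (hAT 0))
        hd (hAσ _) (not_le.1 hcon).le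
      by_cases hH : H 0 j.succ
      · refine (mem_fil.1 hb1).2 (lt_of_lt_of_le hb1' (cnt_le_of_subset subset_rfl ?_))
        exact fun z _ hz => Or.inl ⟨hH, hz⟩
      · refine (mem_fil.1 hb2).2 (lt_of_lt_of_le hb2' (cnt_le_of_subset subset_rfl ?_))
        exact fun z _ hz => Or.inr ⟨hH, hz⟩
    have h1 := cnt_exists_fin_le (A 0) _ σ hbad
    have h2 : ((A 0).card : ℝ) ≤ cnt (A 0) (fun b => ∀ j : Fin m,
        c * (A j.succ).card < cnt (A j.succ) (R j b)) + cnt (A 0) (fun b => ∃ j : Fin m,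
        ¬ c * (A j.succ).card < cnt (A j.succ) (R j b)) := by
      apply card_le_cnt_add
      intro z _
      rw [← not_forall]
      exact em _
    obtain ⟨v, hv, hv'⟩ := exists_of_cnt_pos (A := A 0) (P := fun b => ∀ j : Fin m,
        c * (A j.succ).card < cnt (A j.succ) (R j b)) (by linarith [hA' 0])
    obtain ⟨f, hf, hf'⟩ := ih (fun i j => H i.succ j.succ) (fun j => fil (A j.succ) (R j v))
      (fun j => (fil_subset _ _).trans (hAT _))
      (fun i j hij => Finset.disjoint_of_subset_left (fil_subset _ _)
        (Finset.disjoint_of_subset_right (fil_subset _ _)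
          (hAd _ _ (fun h => hij (Fin.succ_injective _ h)))))
      (by
        intro j
        have h3 := hA j.succ
        have h4 : c ^ m * (c * (A j.succ).card) ≤ c ^ m * (fil (A j.succ) (R j v)).card :=
          mul_le_mul_of_nonneg_left (hv' j).le (by positivity)
        have h5 : c ^ m * (c * (A j.succ).card) = c ^ (m + 1) * ((A j.succ).card : ℝ) := by ring
        push_cast at h3
        linarith)
    refine ⟨Fin.cons v f, ?_, ?_⟩
    · intro i
      refine Fin.cases ?_ (fun j => ?_) i
      · simpa using hv
      · simpa using fil_subset _ _ (hf j)
    · intro i j hij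
      revert hij
      refine Fin.cases ?_ (fun i => ?_) i
      · refine Fin.cases (fun h => absurd h (lt_irrefl _)) (fun j _ => ?_) j
        have h3 := (mem_fil.1 (hf j)).2
        simp only [Fin.cons_zero, Fin.cons_succ]
        rcases h3 with h3 | h3
        · exact ⟨fun _ => h3.1, fun _ => h3.2⟩
        · exact ⟨fun h => absurd h ((SimpleGraph.compl_adj _ _ _).1 h3.2).2, fun h => absurd h h3.1⟩
      · refine Fin.cases (fun h => absurd h (Fin.not_lt_zero _)) (fun j hij => ?_) j
        simp only [Fin.cons_succ]
        exact hf' i j (Fin.succ_lt_succ_iff.1 hij)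

lemma exists_disjoint_parts (m q : ℕ) (T : Finset V) (h : m * q ≤ T.card) :
    ∃ A : Fin m → Finset V, (∀ i, A i ⊆ T) ∧ (∀ i, (A i).card = q) ∧
      ∀ i j, i ≠ j → Disjoint (A i) (A j) := by
  induction m generalizing T with
  | zero => exact ⟨fun i => i.elim0, fun i => i.elim0, fun i => i.elim0, fun i => i.elim0⟩
  | succ m ih =>
    obtain ⟨B, hB, hBc⟩ := Finset.exists_subset_card_eq (s := T) (n := q) (by nlinarith)
    obtain ⟨A, h1, h2, h3⟩ := ih (T \ B) (by
      rw [Finset.card_sdiff_of_subset hB, hBc]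
      rw [Nat.succ_mul] at h
      omega)
    have h4 : ∀ i, Disjoint B (A i) := fun i =>
      Finset.disjoint_of_subset_right (h1 i) Finset.disjoint_sdiff
    refine ⟨Fin.cons B A, ?_, ?_, ?_⟩
    · refine Fin.cases (by simpa using hB) fun i => ?_
      simpa using (h1 i).trans Finset.sdiff_subset
    · refine Fin.cases (by simpa using hBc) fun i => ?_
      simpa using h2 i
    · intro i j
      refine Fin.cases ?_ (fun i => ?_) i
      · refine Fin.cases (fun h => absurd rfl h) (fun j _ => ?_) j
        simpa using h4 j
      · refine Fin.cases (fun _ => ?_) (fun j hij => ?_) j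
        · simpa using (h4 i).symm
        · simpa using h3 i j (fun h => hij (by rw [h]))

lemma exists_pair (hG : NoC6 G) {c : ℝ} (hc0 : 0 < c) (hc1 : c ≤ 1) {T : Finset V}
    (hT : 2 ≤ T.card) : ∃ A ⊆ T, ∃ B ⊆ T, Disjoint A B ∧ c ^ 6 / 100 * T.card ≤ A.card ∧
      c ^ 6 / 100 * T.card ≤ B.card ∧
      ((∀ b ∈ B, cnt A (G.Adj b) ≤ c * A.card) ∨ ∀ b ∈ B, cnt A (Gᶜ.Adj b) ≤ c * A.card) := by
  have hc6 : c ^ 6 ≤ 1 := pow_le_one₀ hc0.le hc1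
  have hc6' : 0 < c ^ 6 := by positivity
  have hTpos : (2 : ℝ) ≤ T.card := by exact_mod_cast hT
  by_cases hsmall : T.card < 12
  · have hs : (T.card : ℝ) ≤ 12 := by exact_mod_cast hsmall.le
    obtain ⟨x, hx, y, hy, hxy⟩ := Finset.one_lt_card.1 (by omega : 1 < T.card)
    have h1 : c ^ 6 / 100 * (T.card : ℝ) ≤ 1 := by nlinarith
    refine ⟨{x}, by simpa using hx, {y}, by simpa using hy, by simpa using hxy, by simpa using h1,
      by simpa using h1, ?_⟩
    by_cases hadj : G.Adj y x
    · right
      intro b hb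
      rw [Finset.mem_singleton] at hb
      subst hb
      have : cnt {x} (Gᶜ.Adj b) = 0 := by
        simp [cnt, fil, Finset.filter_singleton, SimpleGraph.compl_adj, hadj]
      rw [this]
      positivity
    · left
      intro b hb
      rw [Finset.mem_singleton] at hb
      subst hb
      have : cnt {x} (G.Adj b) = 0 := by simp [cnt, fil, Finset.filter_singleton, hadj]
      rw [this]
      positivity
  · by_contra! hcon
    obtain ⟨A, h1, h2, h3⟩ := exists_disjoint_parts 6 (T.card / 6) T (Nat.mul_div_le _ _)
    obtain ⟨f, -, hf⟩ := exists_embedding (G := G) (T := T) (σ := c ^ 6 / 100 * T.card) hc0 hc1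
      (by positivity) (fun A hA B hB hAB hAc hBc => hcon A hA B hB hAB hAc hBc) 6
      (fun i j => (j : ℕ) = i + 1 ∨ ((i : ℕ) = 0 ∧ (j : ℕ) = 5)) A h1 h3 (by
        intro i
        rw [h2 i]
        have h4 : (T.card : ℝ) / 12 ≤ (T.card / 6 : ℕ) := by
          rw [div_le_iff₀ (by norm_num)]
          exact_mod_cast (by omega : T.card ≤ T.card / 6 * 12)
        have h5 := mul_le_mul_of_nonneg_left h4 hc6'.le
        have h6 : 0 < c ^ 6 * (T.card : ℝ) := by positivity
        push_cast
        linarith)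
    have e01 := hf 0 1 (by decide)
    have e02 := hf 0 2 (by decide)
    have e03 := hf 0 3 (by decide)
    have e04 := hf 0 4 (by decide)
    have e05 := hf 0 5 (by decide)
    have e12 := hf 1 2 (by decide)
    have e13 := hf 1 3 (by decide)
    have e14 := hf 1 4 (by decide)
    have e15 := hf 1 5 (by decide)
    have e23 := hf 2 3 (by decide)
    have e24 := hf 2 4 (by decide)
    have e25 := hf 2 5 (by decide)
    have e34 := hf 3 4 (by decide)
    have e35 := hf 3 5 (by decide)
    have e45 := hf 4 5 (by decide)
    norm_num [Fin.val_ofNat] at e01 e02 e03 e04 e05 e12 e13 e14 e15 e23 e24 e25 e34 e35 e45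
    exact hG (f 0) (f 1) (f 2) (f 3) (f 4) (f 5) e01 e12 e23 e34 e45 e05.symm e02 e03 e04 e13 e14
      e15 e24 e25 e35

/-- In a sparse pair, one may arrange for the side all of whose vertices have few neighbours in the
other side to be not much smaller. -/
lemma balance_pair {H : SimpleGraph V} {c : ℝ} {A B T : Finset V} (hA : A ⊆ T)
    (hB : B ⊆ T) (hd : Disjoint A B) {s : ℝ} (hs : 0 < s) (hAs : s ≤ A.card) (hBs : s ≤ B.card)
    (h : ∀ b ∈ B, cnt A (H.Adj b) ≤ c / 2 * A.card) (hc : 0 < c) :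
    ∃ A ⊆ T, ∃ B ⊆ T, Disjoint A B ∧ s ≤ A.card ∧ (A.card : ℝ) ≤ 2 * B.card ∧
      ∀ b ∈ B, cnt A (H.Adj b) ≤ c * A.card := by
  have hApos : (0 : ℝ) < A.card := by linarith
  have hBpos : (0 : ℝ) < B.card := by linarith
  by_cases hAB : (A.card : ℝ) ≤ B.card
  · refine ⟨A, hA, B, hB, hd, hAs, by linarith, fun b hb => (h b hb).trans ?_⟩
    nlinarith
  · refine ⟨B, hB, fil A (fun a => ¬ c * B.card ≤ cnt B (H.Adj a)), (fil_subset _ _).trans hA,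
      Finset.disjoint_of_subset_right (fil_subset _ _) hd.symm, hBs, ?_, ?_⟩
    · have h1 : cnt A (fun a => c * B.card ≤ cnt B (H.Adj a)) ≤ A.card / 2 := by
        apply cnt_heavy_le (d := c / 2 * A.card) hc hBpos
        · intro b hb
          simpa only [H.adj_comm] using h b hb
        · apply le_of_eq; ring
      have h2 : (A.card : ℝ) ≤ cnt A (fun a => ¬ c * B.card ≤ cnt B (H.Adj a)) +
        cnt A (fun a => c * B.card ≤ cnt B (H.Adj a)) := card_le_cnt_add fun _ _ => (em _).symm
      rw [card_fil]
      push Not at hAB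
      linarith
    · exact fun b hb => (not_le.1 (mem_fil.1 hb).2).le
end

section
open scoped Classical

variable {V : Type} {G : SimpleGraph V}

/-- `p` disjoint blocks in `T` of size at least `u` with few edges of `H` between any two of them. -/
def Blocks (H : SimpleGraph V) (T : Finset V) (u c : ℝ) (p : ℕ) : Prop :=
  ∃ l : List (Finset V), l.length = p ∧ (∀ A ∈ l, A ⊆ T ∧ u ≤ A.card) ∧
    l.Pairwise (fun B A => Disjoint B A ∧ ∀ b ∈ B, cnt A (H.Adj b) ≤ c * u)

lemma Blocks.zero (H : SimpleGraph V) (T : Finset V) (u c : ℝ) : Blocks H T u c 0 :=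
  ⟨[], rfl, by simp, List.Pairwise.nil⟩

lemma Blocks.mono {H : SimpleGraph V} {T T' : Finset V} {u c : ℝ} {p : ℕ} (h : Blocks H T u c p)
    (hT : T ⊆ T') : Blocks H T' u c p := by
  obtain ⟨l, h1, h2, h3⟩ := h
  exact ⟨l, h1, fun A hA => ⟨(h2 A hA).1.trans hT, (h2 A hA).2⟩, h3⟩

lemma Blocks.cons {H : SimpleGraph V} {T A B : Finset V} {u c : ℝ} {p : ℕ} (h : Blocks H A u c p)
    (hA : A ⊆ T) (hB : B ⊆ T) (hd : Disjoint A B) (hu : u ≤ B.card)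
    (hc : ∀ b ∈ B, cnt A (H.Adj b) ≤ c * u) : Blocks H T u c (p + 1) := by
  obtain ⟨l, h1, h2, h3⟩ := h
  refine ⟨B :: l, by simp [h1], ?_, List.pairwise_cons.2 ⟨?_, h3⟩⟩
  · intro X hX
    rcases List.mem_cons.1 hX with rfl | hX
    · exact ⟨hB, hu⟩
    · exact ⟨(h2 X hX).1.trans hA, (h2 X hX).2⟩
  · intro X hX
    exact ⟨(Finset.disjoint_of_subset_left (h2 X hX).1 hd).symm, fun b hb =>
      (cnt_le_of_subset (h2 X hX).1 fun _ _ h => h).trans (hc b hb)⟩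

lemma exists_blocks {c : ℝ} (hc0 : 0 < c) (hc1 : c ≤ 1) (p q : ℕ) :
    ∃ δ : ℝ, 0 < δ ∧ δ ≤ 1 / 2 ∧ ∃ K : ℝ, ∀ (V : Type) (G : SimpleGraph V), NoC6 G →
      ∀ T : Finset V, K ≤ T.card → ∃ u : ℝ, δ * T.card ≤ u ∧ u ≤ T.card / 2 ∧
        (Blocks G T u c p ∨ Blocks Gᶜ T u c q) := by
  induction p generalizing q with
  | zero =>
    exact ⟨1 / 2, by norm_num, le_rfl, 0, fun V G _ T _ =>
      ⟨T.card / 2, by linarith, le_rfl, Or.inl (Blocks.zero _ _ _ _)⟩⟩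
  | succ p ihp =>
    induction q with
    | zero =>
      exact ⟨1 / 2, by norm_num, le_rfl, 0, fun V G _ T _ =>
        ⟨T.card / 2, by linarith, le_rfl, Or.inr (Blocks.zero _ _ _ _)⟩⟩
    | succ q ihq =>
      obtain ⟨δ₁, h₁, h₁', K₁, H₁⟩ := ihp (q + 1)
      obtain ⟨δ₂, h₂, h₂', K₂, H₂⟩ := ihq
      set δ := min δ₁ δ₂ with hδ
      have hδ0 : 0 < δ := lt_min h₁ h₂
      have hδ1 : δ ≤ δ₁ := min_le_left _ _
      have hδ2 : δ ≤ δ₂ := min_le_right _ _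
      set d := c * δ with hd
      have hd0 : 0 < d := by positivity
      have hd1 : d ≤ 1 := by nlinarith
      set γ := (d / 2) ^ 6 / 100 with hγ
      have hγ0 : 0 < γ := by positivity
      have hγ1 : γ ≤ 1 := by
        have : (d / 2) ^ 6 ≤ 1 := pow_le_one₀ (by positivity) (by linarith)
        linarith
      refine ⟨δ * γ, by positivity, by nlinarith, max 2 (max K₁ K₂ / γ), ?_⟩
      intro V G hG T hT
      have hT2 : (2 : ℝ) ≤ T.card := (le_max_left _ _).trans hT
      have hTK : max K₁ K₂ ≤ γ * T.card := by
        have := (le_max_right _ _).trans hT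
        rwa [div_le_iff₀' hγ0] at this
      have main : ∀ H : SimpleGraph V, (∃ A ⊆ T, ∃ B ⊆ T, Disjoint A B ∧ γ * T.card ≤ A.card ∧
          γ * T.card ≤ B.card ∧ ∀ b ∈ B, cnt A (H.Adj b) ≤ d / 2 * A.card) →
          ∃ A ⊆ T, ∃ B ⊆ T, Disjoint A B ∧ γ * T.card ≤ A.card ∧ (A.card : ℝ) ≤ 2 * B.card ∧
            ∀ b ∈ B, cnt A (H.Adj b) ≤ d * A.card := by
        rintro H ⟨A, hA, B, hB, hAB, h3, h4, h5⟩
        exact balance_pair hA hB hAB (by positivity) h3 h4 h5 hd0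
      have fin : ∀ (A : Finset V) (u : ℝ), A ⊆ T → γ * T.card ≤ A.card → δ * A.card ≤ u →
          u ≤ A.card / 2 → δ * γ * T.card ≤ u ∧ u ≤ T.card / 2 := by
        intro A u hA h1 h2 h3
        have h4 : (A.card : ℝ) ≤ T.card := by exact_mod_cast Finset.card_le_card hA
        constructor
        · nlinarith
        · linarith
      obtain ⟨A, hA, B, hB, hAB, h3, h4, h5⟩ := exists_pair hG (c := d / 2) (by positivity)
        (by linarith) (T := T) (by exact_mod_cast hT2)
      rcases h5 with h5 | h5
      · obtain ⟨A, hA, B, hB, hAB, h3, h4, h5⟩ := main G ⟨A, hA, B, hB, hAB, h3, h4, h5⟩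
        obtain ⟨u, hu, hu', hl⟩ := H₁ V G hG A ((le_max_left _ _).trans (hTK.trans h3))
        have hu2 : δ * A.card ≤ u := le_trans (by gcongr) hu
        obtain ⟨h6, h7⟩ := fin A u hA h3 hu2 hu'
        refine ⟨u, h6, h7, ?_⟩
        rcases hl with hl | hl
        · refine Or.inl (hl.cons hA hB hAB (by linarith) fun b hb => (h5 b hb).trans ?_)
          rw [hd, mul_assoc]
          gcongr
        · exact Or.inr (hl.mono hA)
      · obtain ⟨A, hA, B, hB, hAB, h3, h4, h5⟩ := main Gᶜ ⟨A, hA, B, hB, hAB, h3, h4, h5⟩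
        obtain ⟨u, hu, hu', hl⟩ := H₂ V G hG A ((le_max_right _ _).trans (hTK.trans h3))
        have hu2 : δ * A.card ≤ u := le_trans (by gcongr) hu
        obtain ⟨h6, h7⟩ := fin A u hA h3 hu2 hu'
        refine ⟨u, h6, h7, ?_⟩
        rcases hl with hl | hl
        · exact Or.inl (hl.mono hA)
        · refine Or.inr (hl.cons hA hB hAB (by linarith) fun b hb => (h5 b hb).trans ?_)
          rw [hd, mul_assoc]
          gcongr

lemma cnt_union_le (A B : Finset V) (P : V → Prop) : cnt (A ∪ B) P ≤ cnt A P + cnt B P := by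
  unfold cnt fil
  rw [Finset.filter_union]
  exact_mod_cast Finset.card_union_le _ _

/-- Trimming blocks to a common size and taking the union. -/
lemma exists_union_of_blocks {H : SimpleGraph V} {T : Finset V} {D : ℝ} {s : ℕ} (hD : 0 ≤ D)
    (l : List (Finset V)) (hl : ∀ A ∈ l, A ⊆ T ∧ s ≤ A.card)
    (hp : l.Pairwise (fun B A => Disjoint B A ∧ ∀ b ∈ B, cnt A (H.Adj b) ≤ D)) :
    ∃ U ⊆ T, U.card = l.length * s ∧ (∀ z ∈ U, ∃ A ∈ l, z ∈ A) ∧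
      ∑ x ∈ U, cnt U (H.Adj x) ≤ l.length * s ^ 2 + D * s * l.length ^ 2 := by
  induction l with
  | nil => exact ⟨∅, by simp, by simp, by simp, by simp⟩
  | cons B l ih =>
    rw [List.pairwise_cons] at hp
    obtain ⟨U, hUT, hUc, hU, hUs⟩ := ih (fun A hA => hl A (List.mem_cons_of_mem _ hA)) hp.2
    obtain ⟨hBT, hBc⟩ := hl B List.mem_cons_self
    obtain ⟨B', hB', hBs⟩ := Finset.exists_subset_card_eq hBc
    have hd : Disjoint B' U := by
      rw [Finset.disjoint_left]
      intro z hz hzU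
      obtain ⟨A, hA, hzA⟩ := hU z hzU
      exact Finset.disjoint_left.1 (hp.1 A hA).1 (hB' hz) hzA
    refine ⟨B' ∪ U, Finset.union_subset (hB'.trans hBT) hUT, ?_, ?_, ?_⟩
    · rw [Finset.card_union_of_disjoint hd, hBs, hUc, List.length_cons]; ring
    · intro z hz
      rcases Finset.mem_union.1 hz with hz | hz
      · exact ⟨B, List.mem_cons_self, hB' hz⟩
      · obtain ⟨A, hA, hzA⟩ := hU z hz
        exact ⟨A, List.mem_cons_of_mem _ hA, hzA⟩
    · have h1 : ∀ b ∈ B', cnt U (H.Adj b) ≤ l.length * D := by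
        intro b hb
        refine le_trans ?_ (cnt_exists_list_le l U (fun A z => z ∈ A ∧ H.Adj b z) D ?_)
        · refine cnt_le_of_subset subset_rfl fun z hz hbz => ?_
          obtain ⟨A, hA, hzA⟩ := hU z hz
          exact ⟨A, hA, hzA, hbz⟩
        · intro A hA
          refine le_trans ?_ ((hp.1 A hA).2 b (hB' hb))
          rw [← card_fil, ← card_fil]
          refine Nat.cast_le.2 (Finset.card_le_card fun z hz => ?_)
          rw [mem_fil] at hz ⊢
          exact hz.2
      have h2 : ∑ b ∈ B', cnt U (H.Adj b) ≤ s * (l.length * D) := by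
        rw [← hBs, ← nsmul_eq_mul]
        exact Finset.sum_le_card_nsmul _ _ _ h1
      have h3 : ∑ x ∈ U, cnt B' (H.Adj x) ≤ s * (l.length * D) := by
        rw [sum_cnt_comm]
        simpa only [H.adj_comm] using h2
      have h4 : ∑ b ∈ B', cnt B' (H.Adj b) ≤ s * s := by
        have : ∑ b ∈ B', cnt B' (H.Adj b) ≤ B'.card • (s : ℝ) :=
          Finset.sum_le_card_nsmul _ _ _ fun b _ => (cnt_le_card _ _).trans (by rw [hBs])
        rwa [hBs, nsmul_eq_mul] at this
      have h5 : ∑ x ∈ B' ∪ U, cnt (B' ∪ U) (H.Adj x) ≤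
          ∑ x ∈ B' ∪ U, (cnt B' (H.Adj x) + cnt U (H.Adj x)) :=
        Finset.sum_le_sum fun x _ => cnt_union_le _ _ _
      rw [Finset.sum_add_distrib, Finset.sum_union hd (f := fun x => cnt B' (H.Adj x)),
        Finset.sum_union hd (f := fun x => cnt U (H.Adj x))] at h5
      refine h5.trans ?_
      rw [List.length_cons]
      push_cast
      nlinarith [mul_nonneg hD (Nat.cast_nonneg (α := ℝ) s)]

lemma Blocks.exists_sparse {H : SimpleGraph V} {T : Finset V} {u ε : ℝ} {p : ℕ}
    (h : Blocks H T u (ε / 8) p) (hε : 0 < ε) (hu : 0 < u) (hp : 8 / ε ≤ p) (hp1 : 1 ≤ p) :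
    ∃ S ⊆ T, u / 2 ≤ S.card ∧ Sparse H ε S := by
  obtain ⟨l, rfl, h2, h3⟩ := h
  set s := ⌈u⌉₊ with hs
  have hsu : u ≤ s := Nat.le_ceil u
  obtain ⟨U, hUT, hUc, -, hUs⟩ := exists_union_of_blocks (s := s) (D := ε / 8 * u) (by positivity) l
    (fun A hA => ⟨(h2 A hA).1, Nat.ceil_le.2 (h2 A hA).2⟩) h3
  have hp1' : (1 : ℝ) ≤ l.length := by exact_mod_cast hp1
  have hs0 : (0 : ℝ) < s := by linarith
  set d : ℝ := 2 * (s + ε / 8 * s * l.length) with hd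
  have hd0 : 0 < d := by positivity
  have hUc' : (U.card : ℝ) = l.length * s := by exact_mod_cast hUc
  have h4 := (mul_cnt_le_sum U (fun x => cnt U (H.Adj x)) (fun _ _ => cnt_nonneg _ _) d).trans hUs
  have h5 : cnt U (fun x => d ≤ cnt U (H.Adj x)) ≤ U.card / 2 := by
    refine le_of_mul_le_mul_left (h4.trans ?_) hd0
    have h6 : ε / 8 * u * s * l.length ^ 2 ≤ ε / 8 * s * s * l.length ^ 2 := by gcongr
    rw [hUc', hd]
    linarith
  have h6 : (U.card : ℝ) ≤ cnt U (fun x => ¬ d ≤ cnt U (H.Adj x)) +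
      cnt U (fun x => d ≤ cnt U (H.Adj x)) := card_le_cnt_add fun _ _ => (em _).symm
  have h7 : (l.length * s : ℝ) / 2 ≤ (fil U (fun x => ¬ d ≤ cnt U (H.Adj x))).card := by
    rw [card_fil]; linarith
  refine ⟨fil U (fun x => ¬ d ≤ cnt U (H.Adj x)), (fil_subset _ _).trans hUT, ?_, ?_⟩
  · refine le_trans ?_ h7
    nlinarith
  · intro x hx
    have h8 := not_le.1 (mem_fil.1 hx).2
    have h9 : cnt (fil U (fun x => ¬ d ≤ cnt U (H.Adj x))) (H.Adj x) ≤ cnt U (H.Adj x) :=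
      cnt_le_of_subset (fil_subset _ _) fun _ _ h => h
    refine h9.trans (h8.le.trans (le_trans ?_ (mul_le_mul_of_nonneg_left h7 hε.le)))
    rw [div_le_iff₀ hε] at hp
    rw [hd]
    nlinarith

lemma Sparse.of_card_le_one {H : SimpleGraph V} {S : Finset V} (h : S.card ≤ 1) {y : ℝ}
    (hy : 0 ≤ y) : Sparse H y S := by
  intro x hx
  have h1 : cnt S (H.Adj x) = 0 := by
    rw [← card_fil]
    norm_cast
    rw [Finset.card_eq_zero, Finset.eq_empty_iff_forall_notMem]
    intro z hz
    rw [mem_fil] at hz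
    have := Finset.card_le_one.1 h x hx z hz.1
    exact hz.2.ne this
  rw [h1]
  positivity

lemma exists_restricted_of_mul_card_le_one (G : SimpleGraph V) {δ y : ℝ} (hy : 0 ≤ y)
    {T : Finset V} (h : δ * T.card ≤ 1) :
    ∃ S ⊆ T, δ * T.card ≤ S.card ∧ Restricted G y S := by
  rcases T.eq_empty_or_nonempty with rfl | ⟨x, hx⟩
  · exact ⟨∅, subset_rfl, by simp, Or.inl (Sparse.of_card_le_one (by simp) hy)⟩
  · exact ⟨{x}, by simpa using hx, by simpa using h, Or.inl (Sparse.of_card_le_one (by simp) hy)⟩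

/-- Rödl's theorem for graphs with no induced six-cycle. -/
lemma exists_restricted {ε : ℝ} (hε : 0 < ε) (hε1 : ε ≤ 1) :
    ∃ δ : ℝ, 0 < δ ∧ ∀ (V : Type) (G : SimpleGraph V), NoC6 G → ∀ T : Finset V,
      ∃ S ⊆ T, δ * T.card ≤ S.card ∧ Restricted G ε S := by
  set p := ⌈8 / ε⌉₊ with hp
  have hp8 : 8 / ε ≤ p := Nat.le_ceil _
  have hp1 : 1 ≤ p := Nat.one_le_ceil_iff.2 (by positivity)
  obtain ⟨δ, hδ, -, K, hK⟩ := exists_blocks (c := ε / 8) (by positivity) (by linarith) p p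
  set L := max K 1 with hL
  have hL1 : 1 ≤ L := le_max_right _ _
  refine ⟨min (δ / 2) (1 / L), by positivity, fun V G hG T => ?_⟩
  by_cases hT : L ≤ T.card
  · obtain ⟨u, h1, -, h2⟩ := hK V G hG T ((le_max_left _ _).trans hT)
    have hT0 : (0 : ℝ) < T.card := by linarith
    have hu : 0 < u := lt_of_lt_of_le (by positivity) h1
    have h3 : min (δ / 2) (1 / L) * T.card ≤ u / 2 := by
      have := mul_le_mul_of_nonneg_right (min_le_left (δ / 2) (1 / L)) hT0.le
      linarith
    rcases h2 with h2 | h2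
    · obtain ⟨S, hS, h4, h5⟩ := h2.exists_sparse hε hu hp8 hp1
      exact ⟨S, hS, h3.trans h4, Or.inl h5⟩
    · obtain ⟨S, hS, h4, h5⟩ := h2.exists_sparse hε hu hp8 hp1
      exact ⟨S, hS, h3.trans h4, Or.inr h5⟩
  · apply exists_restricted_of_mul_card_le_one G hε.le
    push Not at hT
    have := mul_le_mul_of_nonneg_right (min_le_right (δ / 2) (1 / L)) (Nat.cast_nonneg (α := ℝ) T.card)
    refine this.trans ?_
    rw [one_div, inv_mul_le_iff₀ (by positivity)]
    linarith
end

section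
open scoped Classical

variable {V : Type} {G : SimpleGraph V}

/-- The union of sufficiently many pairwise anticomplete sets, trimmed to equal size, is sparse. -/
lemma AFam.exists_sparse {T : Finset V} {s k y : ℝ} (h : AFam G T s k) (hy : 0 < y)
    (hk : 1 / y ≤ k) : ∃ S ⊆ T, s ≤ S.card ∧ Sparse G y S := by
  obtain ⟨ι, hι, B, h1, h2, h3, h4⟩ := h
  choose B' hB' hBc using fun i => Finset.exists_subset_card_eq (Nat.ceil_le.2 (h3 i))
  have hd : ∀ i ∈ Finset.univ, ∀ j ∈ Finset.univ, i ≠ j → Disjoint (B' i) (B' j) := by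
    intro i _ j _ hij
    rw [Finset.disjoint_left]
    intro x hx hx'
    exact (h4 i j hij x (hB' i hx) x (hB' j hx')).1 rfl
  have hcard : (Finset.univ.biUnion B').card = Fintype.card ι * ⌈s⌉₊ := by
    rw [Finset.card_biUnion hd]
    simp [hBc]
  have hn : 1 ≤ y * Fintype.card ι := by
    have := hk.trans h1
    rwa [div_le_iff₀' hy] at this
  have hn0 : 0 < Fintype.card ι := by
    rcases Nat.eq_zero_or_pos (Fintype.card ι) with h | h
    · rw [h] at hn; norm_num at hn
    · exact h
  refine ⟨Finset.univ.biUnion B', ?_, ?_, ?_⟩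
  · rw [Finset.biUnion_subset]
    exact fun i _ => (hB' i).trans (h2 i)
  · rw [hcard]
    refine (Nat.le_ceil s).trans ?_
    exact_mod_cast Nat.le_mul_of_pos_left _ hn0
  · intro x hx
    obtain ⟨i, -, hi⟩ := Finset.mem_biUnion.1 hx
    have h5 : cnt (Finset.univ.biUnion B') (G.Adj x) ≤ (B' i).card := by
      rw [← card_fil]
      refine Nat.cast_le.2 (Finset.card_le_card fun z hz => ?_)
      rw [mem_fil] at hz
      obtain ⟨j, -, hj⟩ := Finset.mem_biUnion.1 hz.1
      by_cases hij : i = j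
      · rwa [hij]
      · exact absurd hz.2 (h4 i j hij x (hB' i hi) z (hB' j hj)).2
    rw [hBc] at h5
    refine h5.trans ?_
    rw [hcard]
    push_cast
    rw [← mul_assoc]
    exact le_mul_of_one_le_left (Nat.cast_nonneg _) hn

lemma AFam.one {T : Finset V} {s : ℝ} (h : s ≤ T.card) : AFam G T s (1 : ℕ) :=
  ⟨Unit, inferInstance, fun _ => T, by simp, fun _ => subset_rfl, fun _ => h,
    fun i j hij => absurd (Subsingleton.elim i j) hij⟩

lemma AFam.sum {T : Finset V} {s : ℝ} {ι : Type} [Fintype ι] {B : ι → Finset V} {p : ι → ℕ}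
    (hB : ∀ i, B i ⊆ T) (h : ∀ i j, i ≠ j → ∀ x ∈ B i, ∀ y ∈ B j, x ≠ y ∧ ¬ G.Adj x y)
    (hp : ∀ i, AFam G (B i) s (p i)) : AFam G T s ((∑ i, p i : ℕ) : ℝ) := by
  choose κ hκ C h1 h2 h3 h4 using hp
  refine ⟨Σ i, κ i, inferInstance, fun a => C a.1 a.2, ?_, fun a => (h2 a.1 a.2).trans (hB a.1),
    fun a => h3 a.1 a.2, ?_⟩
  · rw [Fintype.card_sigma]
    refine Nat.cast_le.2 (Finset.sum_le_sum fun i _ => ?_)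
    exact_mod_cast h1 i
  · rintro ⟨i, a⟩ ⟨j, b⟩ hij x hx y hy
    by_cases h5 : i = j
    · subst h5
      exact h4 i a b (fun h => hij (by rw [h])) x hx y hy
    · exact h i j h5 x (h2 i a hx) y (h2 j b hy)

/-- `T` contains `p` pairwise anticomplete sets and `q` pairwise complete sets of size at least `s`,
with `p * q` polynomially large in `|T| / w`. -/
def HasProduct (G : SimpleGraph V) (w s : ℝ) (r : ℕ) (T : Finset V) : Prop :=
  ∃ p q : ℕ, AFam G T s p ∧ AFam Gᶜ T s q ∧ (T.card : ℝ) ≤ w * (p * q : ℝ) ^ r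

lemma HasProduct.compl {w s : ℝ} {r : ℕ} {T : Finset V} (h : HasProduct G w s r T) :
    HasProduct Gᶜ w s r T := by
  obtain ⟨p, q, h1, h2, h3⟩ := h
  exact ⟨q, p, h2, by rwa [compl_compl], by rwa [mul_comm (q : ℝ)]⟩

lemma HasProduct.of_family {w s u k : ℝ} {r : ℕ} {T : Finset V} (hw : 0 < w) (hsw : s ≤ w)
    (hT : w ≤ T.card) (ih : ∀ B ⊆ T, B.card < T.card → w ≤ B.card → HasProduct G w s r B)
    (hk : 2 ≤ k) (hu : 0 < u) (hsu : s ≤ u) (hTu : T.card ≤ u * k ^ r) (h : AFam G T u k) :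
    HasProduct G w s r T := by
  obtain ⟨ι, hι, B, h1, h2, h3, h4⟩ := h
  have hTu' : T.card ≤ u * (Fintype.card ι : ℝ) ^ r := hTu.trans (by gcongr)
  by_cases huw : u < w
  · refine ⟨Fintype.card ι, 1, ⟨ι, hι, B, le_rfl, h2, fun i => hsu.trans (h3 i), h4⟩,
      AFam.one (hsw.trans hT), hTu'.trans ?_⟩
    rw [Nat.cast_one, mul_one]
    gcongr
  · push Not at huw
    have hι2 : 1 < Fintype.card ι := by
      have : (2 : ℝ) ≤ Fintype.card ι := hk.trans h1
      have : 2 ≤ Fintype.card ι := by exact_mod_cast this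
      omega
    have hlt : ∀ i, (B i).card < T.card := by
      intro i
      obtain ⟨j, hj⟩ := Fintype.exists_ne_of_one_lt_card hι2 i
      have hpos : (0 : ℝ) < (B j).card := hu.trans_le (h3 j)
      obtain ⟨x, hx⟩ := Finset.card_pos.1 (by exact_mod_cast hpos)
      refine Finset.card_lt_card ((Finset.ssubset_iff_of_subset (h2 i)).2 ⟨x, h2 j hx, fun hx' => ?_⟩)
      exact (h4 j i hj x hx x hx').1 rfl
    choose p q hp hq hpq using fun i => ih (B i) (h2 i) (hlt i) (huw.trans (h3 i))
    have : Nonempty ι := Fintype.card_pos_iff.1 (by omega)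
    obtain ⟨i, -, hi⟩ := Finset.exists_min_image Finset.univ p Finset.univ_nonempty
    refine ⟨∑ j, p j, q i, AFam.sum h2 h4 hp, (hq i).mono (h2 i) le_rfl le_rfl, hTu'.trans ?_⟩
    have h5 : (Fintype.card ι : ℝ) * p i ≤ (∑ j, p j : ℕ) := by
      have : Finset.univ.card • p i ≤ ∑ j, p j := Finset.card_nsmul_le_sum _ _ _ hi
      rw [Finset.card_univ, smul_eq_mul] at this
      exact_mod_cast this
    calc u * (Fintype.card ι : ℝ) ^ r ≤ (w * (p i * q i : ℝ) ^ r) * (Fintype.card ι : ℝ) ^ r := by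
          gcongr
          exact (h3 i).trans (hpq i)
      _ = w * ((Fintype.card ι * p i) * q i : ℝ) ^ r := by
          rw [mul_assoc, ← mul_pow]; ring
      _ ≤ _ := by gcongr

lemma hasProduct_of_local {w s : ℝ} {r : ℕ} {U : Finset V} (hw : 0 < w) (hs : 0 < s) (hsw : s ≤ w)
    (hloc : ∀ T ⊆ U, w ≤ T.card → ∃ k u : ℝ, 2 ≤ k ∧ s ≤ u ∧ T.card ≤ u * k ^ r ∧
      (AFam G T u k ∨ AFam Gᶜ T u k)) :
    ∀ T ⊆ U, w ≤ T.card → HasProduct G w s r T := by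
  intro T
  induction h : T.card using Nat.strong_induction_on generalizing T with
  | _ n ih =>
    intro hTU hT
    subst h
    obtain ⟨k, u, hk, hsu, hTu, h1⟩ := hloc T hTU hT
    have ih' : ∀ B ⊆ T, B.card < T.card → w ≤ B.card → HasProduct G w s r B :=
      fun B hB hlt hw => ih B.card hlt B rfl (hB.trans hTU) hw
    rcases h1 with h1 | h1
    · exact HasProduct.of_family hw hsw hT ih' hk (hs.trans_le hsu) hsu hTu h1
    · have := HasProduct.of_family hw hsw hT (fun B hB hlt hw => (ih' B hB hlt hw).compl) hk
        (hs.trans_le hsu) hsu hTu h1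
      simpa only [compl_compl] using this.compl

/-- If every large subset contains many anticomplete or complete sets, then there is a restricted
subset. -/
lemma exists_restricted_of_local {y : ℝ} {r E : ℕ} {U : Finset V} (hy : 0 < y) (hy1 : y ≤ 1)
    (hr : 1 ≤ r) (hU : 0 < U.card)
    (hloc : ∀ T ⊆ U, y ^ (2 * r) * U.card ≤ T.card → ∃ k u : ℝ, 2 ≤ k ∧
      y ^ (2 * r + E) * U.card ≤ u ∧ T.card ≤ u * k ^ r ∧ (AFam G T u k ∨ AFam Gᶜ T u k)) :
    ∃ S ⊆ U, y ^ (2 * r + E) * U.card ≤ S.card ∧ Restricted G y S := by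
  have hU' : (0 : ℝ) < U.card := by exact_mod_cast hU
  obtain ⟨p, q, hp, hq, hpq⟩ := hasProduct_of_local (w := y ^ (2 * r) * U.card)
    (s := y ^ (2 * r + E) * U.card) (by positivity) (by positivity)
    (mul_le_mul_of_nonneg_right (pow_le_pow_of_le_one hy.le hy1 (by omega)) hU'.le) hloc U subset_rfl
    (mul_le_of_le_one_left hU'.le (pow_le_one₀ hy.le hy1))
  have h1 : 1 ≤ y ^ 2 * (p * q) := by
    have h2 : (1 : ℝ) ≤ (y ^ 2 * (p * q)) ^ r := by
      rw [mul_pow, ← pow_mul]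
      refine le_of_mul_le_mul_right ?_ hU'
      linarith
    exact (one_le_pow_iff_of_nonneg (by positivity) (by omega)).1 h2
  by_cases h3 : 1 / y ≤ p
  · obtain ⟨S, hS, h4, h5⟩ := hp.exists_sparse hy h3
    exact ⟨S, hS, h4, Or.inl h5⟩
  · have h6 : 1 / y ≤ q := by
      rw [div_le_iff₀' hy] at h3 ⊢
      by_contra! h7
      push Not at h3
      have := mul_lt_one_of_nonneg_of_lt_one_left (by positivity) h3 h7.le
      linarith
    obtain ⟨S, hS, h4, h5⟩ := hq.exists_sparse hy h6
    exact ⟨S, hS, h4, Or.inr h5⟩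
end

section
open scoped Classical

variable {V : Type} {G : SimpleGraph V}

lemma Sparse.mono {y y' : ℝ} {S : Finset V} (h : Sparse G y S) (hy : y ≤ y') : Sparse G y' S :=
  fun x hx => (h x hx).trans (mul_le_mul_of_nonneg_right hy (Nat.cast_nonneg _))

lemma Restricted.mono {y y' : ℝ} {S : Finset V} (h : Restricted G y S) (hy : y ≤ y') :
    Restricted G y' S :=
  h.imp (fun h => h.mono hy) fun h => h.mono hy

lemma restricted_compl {y : ℝ} {S : Finset V} : Restricted Gᶜ y S ↔ Restricted G y S := by
  unfold Restricted
  rw [compl_compl, or_comm]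

/-- Every set contains a `y`-restricted subset of relative size at least `y ^ C`. -/
def Goal (G : SimpleGraph V) (C : ℕ) (y : ℝ) : Prop :=
  ∀ T : Finset V, ∃ S ⊆ T, y ^ C * T.card ≤ S.card ∧ Restricted G y S

lemma Goal.compl {C : ℕ} {y : ℝ} (h : Goal G C y) : Goal Gᶜ C y := by
  intro T
  obtain ⟨S, h1, h2, h3⟩ := h T
  exact ⟨S, h1, h2, restricted_compl.2 h3⟩

lemma exists_family_of_sparse_stuck {t y : ℝ} {r e : ℕ} (hr : e + 1100 ≤ r) (hG : NoC6 G)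
    (ht : 0 < t) (ht1 : t ≤ 1 / 100) (hy : 0 < y) (hyt : y ≤ t ^ 300)
    (hgoal : Goal G (3 * r) (t ^ 16)) {U T S : Finset V} (big : 1 ≤ y ^ (3 * r) * U.card)
    (hT : y ^ (2 * r) * U.card ≤ T.card) (hS : S ⊆ T) (hSc : t ^ (212 + e) * T.card ≤ S.card)
    (hSs : Sparse G (t ^ 300) S)
    (stuck : ∀ F ⊆ T, (t ^ 2) ^ (212 + e) * T.card ≤ F.card → ¬ Restricted G ((t ^ 2) ^ 300) F) :
    ∃ k u : ℝ, 2 ≤ k ∧ y ^ (3 * r) * U.card ≤ u ∧ T.card ≤ u * k ^ r ∧ AFam G T u k := by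
  have ht1' : t ≤ 1 := by linarith
  have hyr : ∀ m, m ≤ 300 * r → y ^ r ≤ t ^ m := by
    intro m hm
    calc y ^ r ≤ (t ^ 300) ^ r := by gcongr
      _ = t ^ (300 * r) := by rw [pow_mul]
      _ ≤ t ^ m := pow_le_pow_of_le_one ht.le ht1' hm
  have hTc : (0 : ℝ) ≤ T.card := Nat.cast_nonneg _
  have hSm : ∀ m, t ^ (m + 212 + e) * T.card ≤ t ^ m * S.card := by
    intro m
    calc t ^ (m + 212 + e) * T.card = t ^ m * (t ^ (212 + e) * T.card) := by
          rw [add_assoc, pow_add]; ring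
      _ ≤ t ^ m * S.card := by gcongr
  have hUm : ∀ m, m + 212 + e ≤ 300 * r → y ^ (3 * r) * U.card ≤ t ^ m * S.card := by
    intro m hm
    calc y ^ (3 * r) * U.card = y ^ r * (y ^ (2 * r) * U.card) := by
          rw [← mul_assoc, ← pow_add]; congr 2; ring
      _ ≤ t ^ (m + 212 + e) * T.card := by
          gcongr
          exact hyr _ hm
      _ ≤ t ^ m * S.card := hSm m
  have fin : ∀ m b, 1 ≤ b → m + 212 + e ≤ b * r → m + 212 + e ≤ 300 * r →
      AFam G S (t ^ m * S.card) (1 / t ^ b) →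
      ∃ k u : ℝ, 2 ≤ k ∧ y ^ (3 * r) * U.card ≤ u ∧ T.card ≤ u * k ^ r ∧ AFam G T u k := by
    intro m b hb h1 h2 h3
    refine ⟨1 / t ^ b, t ^ m * S.card, ?_, hUm m h2, ?_, h3.mono hS le_rfl le_rfl⟩
    · rw [le_div_iff₀ (by positivity)]
      have : t ^ b ≤ t ^ 1 := pow_le_pow_of_le_one ht.le ht1' hb
      linarith
    · have h4 : t ^ (b * r) ≤ t ^ (m + 212 + e) := pow_le_pow_of_le_one ht.le ht1' h1
      rw [div_pow, one_pow, ← pow_mul, mul_one_div, le_div_iff₀ (by positivity), mul_comm]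
      exact (mul_le_mul_of_nonneg_right h4 hTc).trans (hSm m)
  have hstuck : ∀ F ⊆ S, t ^ 212 * S.card ≤ F.card → ¬ Sparse G (t ^ 600) F := by
    intro F hF hFc hFs
    refine stuck F (hF.trans hS) ?_ (Or.inl (by rwa [← pow_mul]))
    refine le_trans ?_ ((hSm 212).trans hFc)
    rw [← pow_mul]
    exact mul_le_mul_of_nonneg_right (pow_le_pow_of_le_one ht.le ht1' (by omega)) hTc
  have hnested : ∀ X ⊆ S, ∃ Y ⊆ X, t ^ (16 * (3 * r)) * X.card ≤ Y.card ∧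
      Restricted G (t ^ 16) Y := by
    intro X _
    obtain ⟨Y, h1, h2, h3⟩ := hgoal X
    exact ⟨Y, h1, by rwa [pow_mul], h3⟩
  rcases exists_family_of_stuck (C := 3 * r) hG ht ht1 (by omega)
    (big.trans (hUm _ (by omega))) hSs hstuck hnested with h | h
  · exact fin 832 1 le_rfl (by omega) (by omega) (by rwa [pow_one])
  · exact fin _ 200 (by norm_num) (by omega) (by omega) h

lemma Goal.step {y : ℝ} {r e : ℕ} (hr : e + 1100 ≤ r) (hG : NoC6 G) (hG' : NoC6 Gᶜ)
    (base : ∀ T : Finset V, ∃ S ⊆ T, (1 / 100 : ℝ) ^ e * T.card ≤ S.card ∧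
      Restricted G ((1 / 100) ^ 300) S)
    (hy : 0 < y) (hy1 : y < (1 / 100) ^ 300)
    (hgoal : ∀ z, 0 < z → z ≤ 1 / 100 → y ≤ z ^ 2 → Goal G (3 * r) z) : Goal G (3 * r) y := by
  intro U
  have hy1' : y ≤ 1 := hy1.le.trans (pow_le_one₀ (by norm_num) (by norm_num))
  by_cases big : y ^ (3 * r) * U.card ≤ 1
  · exact exists_restricted_of_mul_card_le_one G hy.le big
  push Not at big
  by_contra hno
  refine hno ?_
  have hU : 0 < U.card := by
    rcases Nat.eq_zero_or_pos U.card with h | h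
    · rw [h] at big; norm_num at big
    · exact h
  have h3r : 3 * r = 2 * r + r := by ring
  rw [h3r]
  apply exists_restricted_of_local hy hy1' (by omega) hU
  rw [← h3r]
  intro T hTU hT
  let t : ℕ → ℝ := fun j => (1 / 100) ^ 2 ^ j
  have t0 : ∀ j, 0 < t j := fun j => by positivity
  have t1 : ∀ j, t j ≤ 1 / 100 := fun j =>
    pow_le_of_le_one (by norm_num) (by norm_num) (by positivity)
  have tsucc : ∀ j, t (j + 1) = t j ^ 2 := fun j => by
    simp only [t]
    rw [← pow_mul, pow_succ]
  let P : ℕ → Prop := fun j => ∃ S ⊆ T, t j ^ (212 + e) * T.card ≤ S.card ∧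
    Restricted G (t j ^ 300) S
  have hTc : (0 : ℝ) ≤ T.card := Nat.cast_nonneg _
  have hP0 : P 0 := by
    obtain ⟨S, h1, h2, h3⟩ := base T
    refine ⟨S, h1, le_trans ?_ h2, by simpa [t] using h3⟩
    refine mul_le_mul_of_nonneg_right ?_ hTc
    simp only [t, pow_zero, pow_one]
    exact pow_le_pow_of_le_one (by norm_num) (by norm_num) (by omega)
  have hstuck : ∃ j, y < t j ^ 300 ∧ P j ∧ ¬ P (j + 1) := by
    by_contra! hcon
    have hall : ∀ j, y < t j ^ 300 := by
      have : ∀ j, y < t j ^ 300 ∧ P j := by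
        intro j
        induction j with
        | zero => exact ⟨by simpa [t] using hy1, hP0⟩
        | succ j ih =>
          have h1 := hcon j ih.1 ih.2
          refine ⟨?_, h1⟩
          by_contra! h2
          obtain ⟨S, h3, h4, h5⟩ := h1
          refine hno ⟨S, h3.trans hTU, le_trans ?_ h4, h5.mono h2⟩
          calc y ^ (3 * r) * U.card = y ^ r * (y ^ (2 * r) * U.card) := by
                rw [← mul_assoc, ← pow_add]; congr 2; ring
            _ ≤ t (j + 1) ^ (212 + e) * T.card := by
                gcongr
                calc y ^ r ≤ (t j ^ 300) ^ r := by
                      have := ih.1.le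
                      gcongr
                  _ = t j ^ (300 * r) := by rw [pow_mul]
                  _ ≤ t j ^ (2 * (212 + e)) :=
                      pow_le_pow_of_le_one (t0 j).le ((t1 j).trans (by norm_num)) (by omega)
                  _ = t (j + 1) ^ (212 + e) := by rw [tsucc, pow_mul]
      exact fun j => (this j).1
    obtain ⟨n, hn⟩ := exists_pow_lt_of_lt_one hy (by norm_num : (1 / 100 : ℝ) < 1)
    refine absurd (hall n) (not_lt.2 (le_trans ?_ hn.le))
    simp only [t]
    rw [← pow_mul]
    refine pow_le_pow_of_le_one (by norm_num) (by norm_num) ?_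
    have := Nat.lt_two_pow_self (n := n)
    omega
  obtain ⟨j, hj, ⟨S, hS, hSc, hSr⟩, hnot⟩ := hstuck
  have stuck : ∀ F ⊆ T, (t j ^ 2) ^ (212 + e) * T.card ≤ F.card →
      ¬ Restricted G ((t j ^ 2) ^ 300) F := by
    intro F hF hFc hFr
    refine hnot ⟨F, hF, ?_, ?_⟩
    · rwa [tsucc]
    · rwa [tsucc]
  have hg : Goal G (3 * r) (t j ^ 16) := by
    refine hgoal _ (pow_pos (t0 j) _) ?_ ?_
    · exact (pow_le_of_le_one (t0 j).le ((t1 j).trans (by norm_num)) (by norm_num)).trans (t1 j)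
    · rw [← pow_mul]
      exact hj.le.trans (pow_le_pow_of_le_one (t0 j).le ((t1 j).trans (by norm_num)) (by norm_num))
  rcases hSr with hSr | hSr
  · obtain ⟨k, u, h1, h2, h3, h4⟩ := exists_family_of_sparse_stuck hr hG (t0 j) (t1 j) hy hj.le hg
      big.le hT hS hSc hSr stuck
    exact ⟨k, u, h1, h2, h3, Or.inl h4⟩
  · obtain ⟨k, u, h1, h2, h3, h4⟩ := exists_family_of_sparse_stuck hr hG' (t0 j) (t1 j) hy hj.le
      hg.compl big.le hT hS hSc hSr fun F hF hFc hFr => stuck F hF hFc (restricted_compl.1 hFr)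
    exact ⟨k, u, h1, h2, h3, Or.inr h4⟩

lemma exists_goal : ∃ C : ℕ, 1 ≤ C ∧ ∀ (V : Type) (G : SimpleGraph V), NoC6 G → NoC6 Gᶜ →
    ∀ y, 0 < y → y ≤ 1 / 100 → Goal G C y := by
  obtain ⟨δ, hδ, hbase⟩ := exists_restricted (ε := (1 / 100) ^ 300) (by positivity)
    (pow_le_one₀ (by norm_num) (by norm_num))
  obtain ⟨e, he⟩ := exists_pow_lt_of_lt_one hδ (by norm_num : (1 / 100 : ℝ) < 1)
  refine ⟨3 * (e + 1100), by omega, fun V G hG hG' => ?_⟩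
  have base : ∀ T : Finset V, ∃ S ⊆ T, (1 / 100 : ℝ) ^ e * T.card ≤ S.card ∧
      Restricted G ((1 / 100) ^ 300) S := by
    intro T
    obtain ⟨S, h1, h2, h3⟩ := hbase V G hG T
    exact ⟨S, h1, le_trans (by gcongr) h2, h3⟩
  have main : ∀ i y, 0 < y → y ≤ 1 / 100 → ((1 / 100 : ℝ) ^ 300) ^ 2 ^ i ≤ y →
      Goal G (3 * (e + 1100)) y := by
    intro i
    induction i with
    | zero =>
      intro y hy hy1 hy2 T
      obtain ⟨S, h1, h2, h3⟩ := base T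
      rw [pow_zero, pow_one] at hy2
      refine ⟨S, h1, le_trans ?_ h2, h3.mono hy2⟩
      gcongr
      exact (pow_le_pow_left₀ hy.le hy1 _).trans
        (pow_le_pow_of_le_one (by norm_num) (by norm_num) (by omega))
    | succ i ih =>
      intro y hy hy1 hy2
      by_cases h : y < (1 / 100) ^ 300
      · refine Goal.step le_rfl hG hG' base hy h fun z hz hz1 hyz => ih z hz hz1 ?_
        rw [pow_succ 2, pow_mul] at hy2
        exact le_of_sq_le_sq (hy2.trans hyz) hz.le
      · push Not at h
        exact ih y hy hy1 ((pow_le_of_le_one (by positivity)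
          (pow_le_one₀ (by norm_num) (by norm_num)) (by positivity)).trans h)
  intro y hy hy1
  obtain ⟨n, hn⟩ := exists_pow_lt_of_lt_one hy (by norm_num : (1 / 100 : ℝ) < 1)
  refine main n y hy hy1 (le_trans ?_ hn.le)
  rw [← pow_mul]
  refine pow_le_pow_of_le_one (by norm_num) (by norm_num) ?_
  have := Nat.lt_two_pow_self (n := n)
  omega
end

section
open scoped Classical

variable {V : Type} {G : SimpleGraph V}

lemma noC6_of_not_embedding (h : ¬ Nonempty (cycleGraph 6 ↪g G)) : NoC6 G := by
  intro a b c d e f hab hbc hcd hde hef hfa hac had hae hbd hbe hbf hce hcf hdf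
  apply h
  have key : ∀ i j : Fin 6, G.Adj (![a, b, c, d, e, f] i) (![a, b, c, d, e, f] j) ↔
      (cycleGraph 6).Adj i j := by
    intro i j
    have symm : ∀ {x z : V}, ¬ G.Adj x z → ¬ G.Adj z x := fun h h' => h h'.symm
    fin_cases i <;> fin_cases j <;>
      simp [cycleGraph_adj, hab, hbc, hcd, hde, hef, hfa, hac, had, hae, hbd, hbe, hbf, hce, hcf,
        hdf, hab.symm, hbc.symm, hcd.symm, hde.symm, hef.symm, hfa.symm, symm hac, symm had,
        symm hae, symm hbd, symm hbe, symm hbf, symm hce, symm hcf, symm hdf] <;> decide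
  refine ⟨⟨⟨![a, b, c, d, e, f], fun i j hij => ?_⟩, key _ _⟩⟩
  have twin : ∀ i j : Fin 6, (∀ k, (cycleGraph 6).Adj i k ↔ (cycleGraph 6).Adj j k) → i = j := by
    decide
  exact twin i j fun k => by rw [← key, ← key, hij]

/-- A maximal stable subset of a sparse set is large. -/
lemma Sparse.exists_stable {y : ℝ} {S : Finset V} (h : Sparse G y S) :
    ∃ I ⊆ S, Gᶜ.IsClique (I : Set V) ∧ (S.card : ℝ) ≤ I.card * (y * S.card + 1) := by
  obtain ⟨I, hI, hmax⟩ := Finset.exists_max_image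
    (S.powerset.filter fun I : Finset V => Gᶜ.IsClique (I : Set V)) Finset.card ⟨∅, by simp⟩
  rw [Finset.mem_filter, Finset.mem_powerset] at hI
  refine ⟨I, hI.1, hI.2, ?_⟩
  have h1 : (S.card : ℝ) ≤ cnt S (fun z => z ∈ I) + cnt S (fun z => ∃ x ∈ I.toList, G.Adj x z) := by
    apply card_le_cnt_add
    intro z hz
    by_contra! h2
    have h3 : insert z I ∈ S.powerset.filter fun I : Finset V => Gᶜ.IsClique (I : Set V) := by
      rw [Finset.mem_filter, Finset.mem_powerset]
      refine ⟨Finset.insert_subset hz hI.1, ?_⟩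
      rw [Finset.coe_insert, isClique_insert]
      refine ⟨hI.2, fun x hx hzx => ?_⟩
      rw [compl_adj]
      exact ⟨hzx, fun h4 => h2.2 x (Finset.mem_toList.2 hx) h4.symm⟩
    have h4 := hmax _ h3
    rw [Finset.card_insert_of_notMem h2.1] at h4
    omega
  have h2 : cnt S (fun z => z ∈ I) ≤ I.card := by
    rw [← card_fil]
    exact Nat.cast_le.2 (Finset.card_le_card fun z hz => (mem_fil.1 hz).2)
  have h3 := cnt_exists_list_le I.toList S (fun x z => G.Adj x z) (y * S.card)
    fun x hx => h x (hI.1 (Finset.mem_toList.1 hx))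
  rw [Finset.length_toList] at h3
  linarith

lemma two_le_max_cliqueNum [Fintype V] (h : 1 < Fintype.card V) :
    2 ≤ max Gᶜ.cliqueNum G.cliqueNum := by
  obtain ⟨a, b, hab⟩ := Fintype.one_lt_card_iff.1 h
  have hc : ({a, b} : Finset V).card = 2 := Finset.card_pair hab
  by_cases hadj : G.Adj a b
  · refine le_max_of_le_right ?_
    rw [← hc]
    apply IsClique.card_le_cliqueNum
    rw [Finset.coe_pair, isClique_pair]
    exact fun _ => hadj
  · refine le_max_of_le_left ?_
    rw [← hc]
    apply IsClique.card_le_cliqueNum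
    rw [Finset.coe_pair, isClique_pair]
    exact fun _ => (compl_adj _ _ _).2 ⟨hab, hadj⟩

lemma Restricted.le_max_cliqueNum [Fintype V] {y : ℝ} {S : Finset V} (hy : 0 < y)
    (h : Restricted G y S) (hS : 1 ≤ y * S.card) :
    1 / (2 * y) ≤ ((max Gᶜ.cliqueNum G.cliqueNum : ℕ) : ℝ) := by
  have main : ∀ H : SimpleGraph V, Sparse H y S → 1 / (2 * y) ≤ (Hᶜ.cliqueNum : ℝ) := by
    intro H hH
    obtain ⟨I, -, hI, hc⟩ := hH.exists_stable
    have h1 : (I.card : ℝ) ≤ Hᶜ.cliqueNum := by exact_mod_cast hI.card_le_cliqueNum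
    refine le_trans ?_ h1
    have hS0 : (0 : ℝ) < S.card := by
      by_contra! h2
      nlinarith
    rw [div_le_iff₀ (by positivity)]
    refine le_of_mul_le_mul_right (a := (S.card : ℝ)) ?_ hS0
    have : (I.card : ℝ) * (y * S.card + 1) ≤ I.card * (y * S.card + y * S.card) := by gcongr
    linarith
  rw [Nat.cast_max]
  rcases h with h | h
  · exact le_max_of_le_left (main G h)
  · have := main Gᶜ h
    rw [compl_compl] at this
    exact le_max_of_le_right this

lemma erdos_hajnal {C : ℕ} (hC : 1 ≤ C) [Fintype V]
    (hgoal : ∀ y, 0 < y → y ≤ 1 / 100 → Goal G C y) :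
    (Fintype.card V : ℝ) ^ (1 / (16 * C) : ℝ) ≤ ((max Gᶜ.cliqueNum G.cliqueNum : ℕ) : ℝ) := by
  have hC' : (1 : ℝ) ≤ C := by exact_mod_cast hC
  set z := (Fintype.card V : ℝ) ^ (1 / (16 * C) : ℝ) with hz
  have hzn : z ^ (16 * C) = Fintype.card V := by
    rw [hz, ← Real.rpow_natCast, ← Real.rpow_mul (Nat.cast_nonneg _)]
    push_cast
    rw [one_div, inv_mul_cancel₀ (by positivity), Real.rpow_one]
  have hz0 : 0 ≤ z := by positivity
  by_cases hz2 : z ≤ 2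
  · by_cases hn : 1 < Fintype.card V
    · exact hz2.trans (by exact_mod_cast two_le_max_cliqueNum hn)
    · rcases isEmpty_or_nonempty V with hV | ⟨⟨v⟩⟩
      · have : z = 0 := by
          rw [hz, Fintype.card_eq_zero, Nat.cast_zero, Real.zero_rpow (by positivity)]
        rw [this]
        positivity
      · have h1 : z ≤ 1 := by
          rw [hz]
          exact Real.rpow_le_one (Nat.cast_nonneg _) (by exact_mod_cast not_lt.1 hn) (by positivity)
        refine h1.trans ?_
        rw [Nat.one_le_cast]
        refine le_max_of_le_right ?_
        rw [← Finset.card_singleton v]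
        apply IsClique.card_le_cliqueNum
        simp
  · push Not at hz2
    have hz8 : (256 : ℝ) ≤ z ^ 8 := by
      calc (256 : ℝ) = 2 ^ 8 := by norm_num
        _ ≤ z ^ 8 := by gcongr
    obtain ⟨S, -, h1, h2⟩ := hgoal (1 / z ^ 8) (by positivity)
      (one_div_le_one_div_of_le (by norm_num) (by linarith)) Finset.univ
    rw [Finset.card_univ, ← hzn] at h1
    have h3 : z ^ 8 ≤ S.card := by
      refine le_trans ?_ h1
      have : (1 / z ^ 8) ^ C * z ^ (16 * C) = z ^ (8 * C) := by
        rw [div_pow, one_pow, ← pow_mul, div_mul_eq_mul_div, one_mul, div_eq_iff (by positivity),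
          ← pow_add]
        congr 1
        ring
      rw [this]
      exact pow_le_pow_right₀ (by linarith) (by omega)
    refine le_trans ?_ (h2.le_max_cliqueNum (by positivity) ?_)
    · have : 1 / (2 * (1 / z ^ 8)) = z ^ 7 * z / 2 := by
        field_simp
      rw [this]
      have h4 : (2 : ℝ) ≤ z ^ 7 := by
        calc (2 : ℝ) ≤ 2 ^ 7 := by norm_num
          _ ≤ z ^ 7 := by gcongr
      nlinarith
    · rw [one_div, inv_mul_eq_div, le_div_iff₀ (by positivity), one_mul]
      exact h3
end

/-- `{C₆, C̄₆}` has the Erdős–Hajnal property. -/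
theorem stmt_2 :
    ∃ τ : ℝ, 0 < τ ∧
      ∀ (V : Type) [Fintype V] (G : SimpleGraph V),
        ¬ Nonempty (cycleGraph 6 ↪g G) →
        ¬ Nonempty ((cycleGraph 6)ᶜ ↪g G) →
        (Fintype.card V : ℝ) ^ τ ≤ ((max (alphaNum G) (omegaNum G) : ℕ) : ℝ) := by
  obtain ⟨C, hC, h⟩ := exists_goal
  refine ⟨1 / (16 * C), by positivity, fun V _ G h1 h2 => ?_⟩
  refine erdos_hajnal hC (h V G (noC6_of_not_embedding h1) (noC6_of_not_embedding ?_))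
  exact fun ⟨f⟩ => h2 ⟨by simpa only [compl_compl] using Embedding.complEquiv f⟩
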